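/- arXiv:0710.5336 — 3 statements merged into one kernel-verified Lean document; each statement's English description precedes it below -/
import Mathlib

section
/- Let k be a field of characteristic not equal to 2 and let f be a non-degenerate quadratic form in k[x₁,x₂,x₃]. Set R = k[x₁,x₂,x₃]/(f). If the equation f = 0 has no non-trivial solution in k, then the divisor class group Cl(R) is trivial. (Samuel's theorem; Proposition 2.2.) -/
/-!
Samuel's theorem (Proposition 2.2): if `k` is a field of characteristic `≠ 2` and `f` is a
non-degenerate quadratic form in `k[x₁,x₂,x₃]` such that `f = 0` has no non-trivial solution
in `k`, then the divisor class group of `R = k[x₁,x₂,x₃]/(f)` is trivial.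
-/

noncomputable section

/-- The length of a module, defined as the Krull dimension (longest chain length) of its lattice
of submodules. -/
def moduleLength (A : Type*) (M : Type*) [CommRing A] [AddCommGroup M] [Module A M] :
    WithBot ℕ∞ :=
  Order.krullDim (Submodule A M)

/-- The group of divisors of `A`: formal `ℤ`-linear combinations of height-one primes. -/
abbrev DivisorGroup (A : Type*) [CommRing A] : Type _ :=
  {P : PrimeSpectrum A // Order.height P = 1} →₀ ℤ

/-- The subgroup of principal divisors: the subgroup generated by the divisors
`div(x) = Σ_P ord_P(x)·[P]` of the nonzero elements `x` of `A`, where `ord_P(x)` is the length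
of the `A_P`-module `A_P/xA_P`. -/
def principalDivisors (A : Type*) [CommRing A] : AddSubgroup (DivisorGroup A) :=
  AddSubgroup.closure
    { d | ∃ x : A, x ≠ 0 ∧ ∀ P : {P : PrimeSpectrum A // Order.height P = 1},
        ∃ n : ℕ, d P = (n : ℤ) ∧
          moduleLength (Localization.AtPrime P.1.asIdeal)
            (Localization.AtPrime P.1.asIdeal ⧸
              Ideal.span {algebraMap A (Localization.AtPrime P.1.asIdeal) x}) = (n : WithBot ℕ∞) }

/-- The divisor class group of `A`: divisors modulo principal divisors. -/
def DivClassGroup (A : Type*) [CommRing A] : Type _ :=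
  DivisorGroup A ⧸ principalDivisors A

/-!
Write `f`, up to a constant, as `y² - Q(x₀, x₁) y - P(x₀, x₁)`; the coefficient of `y²` is not `0`
because `(1, 0, 0)` is not a zero of `f`. So `R = k[y, x₀, x₁]/(f)` is the cone over a conic without
rational points, and we show that it is factorial by Nagata's theorem for the element `x₁`. This
element is prime because its vanishing cuts out the cone over a point of degree `2`. Inverting it
gives `D[T, T⁻¹]`, where `D` is the coordinate ring of the affine conic `x₁ = 1`.

`D` is a principal ideal domain. Indeed, let `I` be a nonzero ideal of codimension `d`. By
Riemann–Roch there is a nonzero `x ∈ I` whose pole at infinity is so small that `D/(x)` has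
dimension at most `d + 1`. Hence `I/(x)` has dimension at most `1`, and dimension `1` is impossible
since `D` would act on it through a homomorphism `D → k`, that is, through a rational point.
-/

section ClassGroup

variable {A : Type*} [CommRing A]

theorem moduleLength_localization_quotient_eq_one (P : Ideal A) [P.IsPrime] {x : A}
    (hP : P = Ideal.span {x}) :
    moduleLength (Localization.AtPrime P) (Localization.AtPrime P ⧸
      Ideal.span {algebraMap A (Localization.AtPrime P) x}) = 1 := by
  have hmax : Ideal.span {algebraMap A (Localization.AtPrime P) x} =
      IsLocalRing.maximalIdeal (Localization.AtPrime P) := by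
    rw [← Localization.AtPrime.map_eq_maximalIdeal, ← Set.image_singleton, ← Ideal.map_span, ← hP]
  have : IsSimpleModule (Localization.AtPrime P) (Localization.AtPrime P ⧸
      Ideal.span {algebraMap A (Localization.AtPrime P) x}) := by
    rw [isSimpleModule_iff_isCoatom, hmax]
    exact Ideal.isMaximal_def.mp inferInstance
  rw [moduleLength, ← Module.coe_length, Module.length_eq_one_iff.mpr this]
  rfl

theorem moduleLength_localization_quotient_eq_zero (P : Ideal A) [P.IsPrime] {x : A}
    (hx : x ∉ P) :
    moduleLength (Localization.AtPrime P) (Localization.AtPrime P ⧸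
      Ideal.span {algebraMap A (Localization.AtPrime P) x}) = 0 := by
  have hu : IsUnit (algebraMap A (Localization.AtPrime P) x) :=
    IsLocalization.map_units _ (⟨x, hx⟩ : P.primeCompl)
  have : Subsingleton (Localization.AtPrime P ⧸
      Ideal.span {algebraMap A (Localization.AtPrime P) x}) :=
    Ideal.Quotient.subsingleton_iff.mpr (Ideal.span_singleton_eq_top.mpr hu)
  rw [moduleLength, ← Module.coe_length, Module.length_eq_zero_iff.mpr this]
  rfl

theorem single_mem_principalDivisors (P : {P : PrimeSpectrum A // Order.height P = 1})
    {x : A} (hx : x ≠ 0) (hP : P.1.asIdeal = Ideal.span {x}) :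
    Finsupp.single P 1 ∈ principalDivisors A := by
  refine AddSubgroup.subset_closure ⟨x, hx, fun P' ↦ ?_⟩
  by_cases hPP' : P = P'
  · subst hPP'
    exact ⟨1, by simp, moduleLength_localization_quotient_eq_one _ hP⟩
  · refine ⟨0, by simp [hPP'], moduleLength_localization_quotient_eq_zero _ fun hxP' ↦ ?_⟩
    have hle : P.1 ≤ P'.1 := by
      rwa [← PrimeSpectrum.asIdeal_le_asIdeal, hP, Ideal.span_singleton_le_iff_mem]
    have hlt : P.1 < P'.1 := lt_of_le_of_ne hle (Subtype.coe_injective.ne hPP')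
    have := Order.height_strictMono hlt (by simp [P.2])
    simp [P.2, P'.2] at this

theorem subsingleton_divClassGroup_of_uniqueFactorizationMonoid (A : Type*) [CommRing A]
    [IsDomain A] [UniqueFactorizationMonoid A] : Subsingleton (DivClassGroup A) := by
  have hsingle (P : {P : PrimeSpectrum A // Order.height P = 1}) :
      Finsupp.single P 1 ∈ principalDivisors A := by
    have hheight : P.1.asIdeal.height = 1 := P.1.height_eq_orderHeight.trans P.2
    obtain ⟨x, hx⟩ := UniqueFactorizationMonoid.isPrincipal_of_height_eq_one hheight
    refine single_mem_principalDivisors P (fun hx0 ↦ ?_) hx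
    exact Ideal.ne_bot_of_height_eq_one hheight (by simp [hx, hx0])
  have htop : principalDivisors A = ⊤ := by
    rw [eq_top_iff]
    rintro d -
    induction d using Finsupp.induction_linear with
    | zero => exact zero_mem _
    | add d d' hd hd' => exact add_mem hd hd'
    | single P n => simpa using zsmul_mem (hsingle P) n
  rw [DivClassGroup, htop]
  exact QuotientAddGroup.subsingleton_quotient_top

end ClassGroup

/-- Nagata's theorem, with the localization `R[1/z]` replaced by any ring `S` between `R` and
`R[1/z]`. -/
theorem uniqueFactorizationMonoid_of_injective_of_prime {R S : Type*} [CommRing R] [IsDomain R]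
    [IsNoetherianRing R] [CommRing S] [IsDomain S] [UniqueFactorizationMonoid S] (φ : R →+* S)
    (hφ : Function.Injective φ) {z : R} (hz : Prime z)
    (hdenom : ∀ s : S, ∃ (n : ℕ) (r : R), φ r = φ z ^ n * s) :
    UniqueFactorizationMonoid R := by
  let L := Localization.Away (φ z)
  have hz0 : φ z ≠ 0 := (map_ne_zero_iff φ hφ).mpr hz.ne_zero
  have hSL : Function.Injective (algebraMap S L) :=
    IsLocalization.injective L (powers_le_nonZeroDivisors_of_noZeroDivisors hz0)
  have hL : UniqueFactorizationMonoid L :=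
    UniqueFactorizationMonoid.of_isLocalization (Submonoid.powers (φ z)) L
  algebraize [(algebraMap S L).comp φ]
  have : IsLocalization.Away z L := by
    refine IsLocalization.Away.mk z (IsLocalization.Away.algebraMap_isUnit (φ z)) (fun l ↦ ?_)
      fun a b hab ↦ ⟨0, congrArg _ (hφ (hSL hab))⟩
    obtain ⟨m, s, hs⟩ := IsLocalization.Away.surj (φ z) l
    obtain ⟨n, r, hr⟩ := hdenom s
    refine ⟨n + m, r, ?_⟩
    change l * algebraMap S L (φ z) ^ (n + m) = algebraMap S L (φ r)
    rw [hr, map_mul, ← hs, map_pow, pow_add]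
    ring
  exact (UniqueFactorizationMonoid.iff_of_isLocalizationAway_of_prime hz L).mpr hL

section AffineConic

open Polynomial

section CommRing

variable {R : Type*} [CommRing R] {p q : R[X]}

theorem eq_zero_of_coeff_max_natDegree_eq_zero {a b : R[X]}
    (ha : a.coeff (max a.natDegree b.natDegree) = 0)
    (hb : b.coeff (max a.natDegree b.natDegree) = 0) : a = 0 ∧ b = 0 := by
  wlog hab : a.natDegree ≤ b.natDegree generalizing a b
  · rw [max_comm] at ha hb
    exact (this hb ha (le_of_not_ge hab)).symm
  rw [max_eq_right hab] at ha hb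
  have hb0 : b = 0 := leadingCoeff_eq_zero.mp hb
  subst hb0
  rw [natDegree_zero, Nat.le_zero] at hab
  rw [natDegree_zero, ← hab] at ha
  exact ⟨leadingCoeff_eq_zero.mp ha, rfl⟩

theorem norm_mul_X_sq (x : QuadraticAlgebra R[X] p q) :
    x.norm * X ^ 2 = X ^ 2 * (x.re * x.re) + q * X * (x.re * (x.im * X)) -
      p * (x.im * X * (x.im * X)) := by
  rw [QuadraticAlgebra.norm_def]
  ring

theorem natDegree_norm_le (hp : p.natDegree ≤ 2) (hq : q.natDegree ≤ 1)
    {x : QuadraticAlgebra R[X] p q} {n : ℕ} (hre : x.re.natDegree ≤ n)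
    (him : (x.im * X).natDegree ≤ n) : x.norm.natDegree ≤ 2 * n := by
  nontriviality R
  by_cases hx : x.norm = 0
  · simp [hx]
  have hqX : (q * X).natDegree ≤ 2 := natDegree_mul_le_of_le hq natDegree_X_le
  have h : (x.norm * X ^ 2).natDegree ≤ 2 + (n + n) := by
    rw [norm_mul_X_sq]
    refine (natDegree_sub_le _ _).trans (max_le (natDegree_add_le_of_degree_le ?_ ?_) ?_)
    · exact natDegree_mul_le_of_le (natDegree_X_pow_le 2) (natDegree_mul_le_of_le hre hre)
    · exact natDegree_mul_le_of_le hqX (natDegree_mul_le_of_le hre him)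
    · exact natDegree_mul_le_of_le hp (natDegree_mul_le_of_le him him)
  rw [natDegree_mul_X_pow 2 hx] at h
  lia

/-- Here `⟨x.re.coeff n, (x.im * X).coeff n⟩` is the leading part of `x` at infinity. -/
theorem coeff_norm_eq_norm (hp : p.natDegree ≤ 2) (hq : q.natDegree ≤ 1)
    {x : QuadraticAlgebra R[X] p q} {n : ℕ} (hre : x.re.natDegree ≤ n)
    (him : (x.im * X).natDegree ≤ n) :
    x.norm.coeff (2 * n) = (⟨x.re.coeff n, (x.im * X).coeff n⟩ :
      QuadraticAlgebra R (p.coeff 2) (q.coeff 1)).norm := by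
  have hqX : (q * X).natDegree ≤ 2 := natDegree_mul_le_of_le hq natDegree_X_le
  have hcoeff {a b c : R[X]} (ha : a.natDegree ≤ 2) (hb : b.natDegree ≤ n)
      (hc : c.natDegree ≤ n) :
      (a * (b * c)).coeff (2 * n + 2) = a.coeff 2 * (b.coeff n * c.coeff n) := by
    rw [show 2 * n + 2 = 2 + (n + n) by ring,
      coeff_mul_add_eq_of_natDegree_le ha (natDegree_mul_le_of_le hb hc),
      coeff_mul_add_eq_of_natDegree_le hb hc]
  rw [← coeff_mul_X_pow x.norm 2 (2 * n), norm_mul_X_sq, coeff_sub, coeff_add,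
    hcoeff (natDegree_X_pow_le 2) hre hre, hcoeff hqX hre him, hcoeff hp him him,
    coeff_X_pow_self, coeff_mul_X, QuadraticAlgebra.norm_def]
  ring

end CommRing

variable {k : Type*} [Field k] {p q : k[X]}

theorem norm_ne_zero_of_ne_zero (hp : p.natDegree ≤ 2) (hq : q.natDegree ≤ 1)
    (hinf : ∀ r, r ^ 2 ≠ p.coeff 2 + q.coeff 1 * r) {x : QuadraticAlgebra k[X] p q} (hx : x ≠ 0) :
    x.norm ≠ 0 := by
  intro hnorm
  have : Fact (∀ r, r ^ 2 ≠ p.coeff 2 + q.coeff 1 * r) := ⟨hinf⟩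
  have hlead := coeff_norm_eq_norm hp hq (x := x) (le_max_left x.re.natDegree (x.im * X).natDegree)
    (le_max_right _ _)
  rw [hnorm, coeff_zero, eq_comm, QuadraticAlgebra.norm_eq_zero_iff_eq_zero,
    QuadraticAlgebra.ext_iff] at hlead
  obtain ⟨hre, him⟩ := eq_zero_of_coeff_max_natDegree_eq_zero hlead.1 hlead.2
  exact hx (QuadraticAlgebra.ext hre (by simpa using him))

theorem isDomain_affineConic (hp : p.natDegree ≤ 2) (hq : q.natDegree ≤ 1)
    (hinf : ∀ r, r ^ 2 ≠ p.coeff 2 + q.coeff 1 * r) : IsDomain (QuadraticAlgebra k[X] p q) := by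
  have : NoZeroDivisors (QuadraticAlgebra k[X] p q) := by
    refine ⟨fun {x y} hxy ↦ ?_⟩
    by_contra! hne
    have hx := norm_ne_zero_of_ne_zero hp hq hinf hne.1
    have hy := norm_ne_zero_of_ne_zero hp hq hinf hne.2
    exact mul_ne_zero hx hy (by rw [← map_mul, hxy, QuadraticAlgebra.norm_zero])
  exact NoZeroDivisors.to_isDomain _

theorem finrank_quotient_span_singleton_eq_natDegree_norm [IsDomain (QuadraticAlgebra k[X] p q)]
    {x : QuadraticAlgebra k[X] p q} (hx : x ≠ 0) :
    Module.finrank k (QuadraticAlgebra k[X] p q ⧸ Ideal.span {x}) = x.norm.natDegree := by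
  rw [finrank_quotient_span_eq_natDegree_norm (QuadraticAlgebra.basis p q) hx,
    ← QuadraticAlgebra.det_toLinearMap_eq_norm, Algebra.norm_apply]
  rfl

theorem finiteDimensional_quotient_of_ne_bot [IsDomain (QuadraticAlgebra k[X] p q)]
    {I : Ideal (QuadraticAlgebra k[X] p q)} (hI : I ≠ ⊥) :
    FiniteDimensional k (QuadraticAlgebra k[X] p q ⧸ I) :=
  Module.Finite.equiv (Ideal.quotientEquivDirectSum k (QuadraticAlgebra.basis p q) hI).symm

/-- Riemann–Roch in its simplest form: the functions with a pole of order at most `n` at infinity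
form a space of dimension `2 * n + 1`. -/
theorem exists_mem_ne_zero_natDegree_le (I : Ideal (QuadraticAlgebra k[X] p q))
    [FiniteDimensional k (QuadraticAlgebra k[X] p q ⧸ I)] {n : ℕ}
    (hn : Module.finrank k (QuadraticAlgebra k[X] p q ⧸ I) < 2 * n + 1) :
    ∃ x ∈ I, x ≠ 0 ∧ x.re.natDegree ≤ n ∧ (x.im * X).natDegree ≤ n := by
  let F : (degreeLT k (n + 1) × degreeLT k n) →ₗ[k] QuadraticAlgebra k[X] p q :=
    { toFun y := ⟨y.1, y.2⟩
      map_add' _ _ := rfl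
      map_smul' _ _ := rfl }
  have hfinite (m : ℕ) : FiniteDimensional k (degreeLT k m) := .equiv (degreeLTEquiv k m).symm
  have hfinrank (m : ℕ) : Module.finrank k (degreeLT k m) = m := by
    rw [(degreeLTEquiv k m).finrank_eq, Module.finrank_fin_fun]
  have hker : LinearMap.ker ((Ideal.Quotient.mkₐ k I).toLinearMap ∘ₗ F) ≠ ⊥ := by
    apply LinearMap.ker_ne_bot_of_finrank_lt
    rw [Module.finrank_prod, hfinrank, hfinrank]
    lia
  obtain ⟨⟨⟨u, hu⟩, ⟨v, hv⟩⟩, hmem, hne⟩ := Submodule.exists_mem_ne_zero_of_ne_bot hker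
  refine ⟨⟨u, v⟩, Ideal.Quotient.eq_zero_iff_mem.mp hmem, fun h ↦ hne ?_, ?_, ?_⟩
  · simpa [QuadraticAlgebra.ext_iff] using h
  · exact natDegree_le_iff_coeff_eq_zero.mpr
      ((degree_lt_iff_coeff_zero u (n + 1)).mp (mem_degreeLT.mp hu))
  · rcases eq_or_ne v 0 with rfl | hv0
    · simp
    · rw [natDegree_mul_X hv0]
      exact (natDegree_lt_iff_degree_lt hv0).mpr (mem_degreeLT.mp hv)

section Ideal

variable {A : Type*} [CommRing A] [Algebra k A]

theorem nonempty_algHom_of_finrank_eq_one {M : Type*} [AddCommGroup M] [Module k M] [Module A M]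
    [IsScalarTower k A M] (hM : Module.finrank k M = 1) : Nonempty (A →ₐ[k] k) := by
  have hbij : Function.Bijective (Algebra.ofId k (Module.End k M)) := by
    refine Function.bijective_iff_existsUnique _ |>.mpr fun u ↦ ?_
    simpa [LinearMap.ext_iff, eq_comm] using
      LinearMap.existsUnique_eq_smul_id_of_finrank_eq_one hM u
  exact ⟨(AlgEquiv.ofBijective _ hbij).symm.toAlgHom.comp (Algebra.lsmul k k M)⟩

theorem finrank_quotient_eq_add_finrank_ker_factor {I J : Ideal A} (h : I ≤ J)
    [FiniteDimensional k (A ⧸ I)] :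
    Module.finrank k (A ⧸ I) =
      Module.finrank k (A ⧸ J) + Module.finrank k (LinearMap.ker (Submodule.factor h)) := by
  rw [← ((Submodule.factor h).restrictScalars k).finrank_range_add_finrank_ker,
    LinearMap.range_eq_top.mpr, finrank_top]
  · rfl
  · exact Submodule.factor_surjective h

theorem eq_of_finrank_quotient_le_add_one (hA : IsEmpty (A →ₐ[k] k)) {I J : Ideal A} (h : I ≤ J)
    [FiniteDimensional k (A ⧸ I)]
    (hfinrank : Module.finrank k (A ⧸ I) ≤ Module.finrank k (A ⧸ J) + 1) : I = J := by
  have hne_one : Module.finrank k (LinearMap.ker (Submodule.factor h)) ≠ 1 := fun h1 ↦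
    hA.elim (nonempty_algHom_of_finrank_eq_one h1).some
  have hzero : Module.finrank k (LinearMap.ker (Submodule.factor h)) = 0 := by
    have := finrank_quotient_eq_add_finrank_ker_factor (k := k) h
    lia
  have : FiniteDimensional k (LinearMap.ker (Submodule.factor h)) :=
    .of_injective ((LinearMap.ker (Submodule.factor h)).subtype.restrictScalars k)
      Subtype.val_injective
  have hinj : Function.Injective (Submodule.factor h) :=
    LinearMap.ker_eq_bot.mp <| Submodule.subsingleton_iff_eq_bot.mp <|
      Module.finrank_zero_iff.mp hzero
  refine le_antisymm h fun x hx ↦ Ideal.Quotient.eq_zero_iff_mem.mp (hinj ?_)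
  exact Ideal.Quotient.eq_zero_iff_mem.mpr hx

end Ideal

theorem isPrincipalIdealRing_affineConic (hp : p.natDegree ≤ 2) (hq : q.natDegree ≤ 1)
    (hinf : ∀ r, r ^ 2 ≠ p.coeff 2 + q.coeff 1 * r)
    (haff : IsEmpty (QuadraticAlgebra k[X] p q →ₐ[k] k)) :
    IsPrincipalIdealRing (QuadraticAlgebra k[X] p q) := by
  have := isDomain_affineConic hp hq hinf
  refine ⟨fun I ↦ ?_⟩
  by_cases hI : I = ⊥
  · rw [hI]; infer_instance
  have := finiteDimensional_quotient_of_ne_bot hI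
  set d := Module.finrank k (QuadraticAlgebra k[X] p q ⧸ I) with hd
  obtain ⟨x, hxI, hx0, hre, him⟩ :=
    exists_mem_ne_zero_natDegree_le I (n := (d + 1) / 2) (by lia)
  have := finiteDimensional_quotient_of_ne_bot (mt Ideal.span_singleton_eq_bot.mp hx0)
  refine ⟨x, (eq_of_finrank_quotient_le_add_one haff
    ((Ideal.span_singleton_le_iff_mem I).mpr hxI) ?_).symm⟩
  rw [finrank_quotient_span_singleton_eq_natDegree_norm hx0, ← hd]
  have := natDegree_norm_le hp hq hre him
  lia

end AffineConic

section LiftOfRingHom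

variable {B S : Type*} [CommRing B] [CommRing S] {a b : B}

/-- The ring homomorphism `u + v * ω ↦ g u + g v * s`, the version of `QuadraticAlgebra.lift` for a
target that is not an algebra over `B`. -/
def quadraticLift (g : B →+* S) (s : S) (hs : s * s = g a + g b * s) :
    QuadraticAlgebra B a b →+* S :=
  letI := g.toAlgebra
  (QuadraticAlgebra.lift ⟨s, by
    simp only [Algebra.smul_def, RingHom.algebraMap_toAlgebra, hs, mul_one]⟩ :
      QuadraticAlgebra B a b →ₐ[B] S).toRingHom

theorem quadraticLift_apply (g : B →+* S) {s : S} (hs : s * s = g a + g b * s)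
    (x : QuadraticAlgebra B a b) : quadraticLift g s hs x = g x.re + g x.im * s := by
  let := g.toAlgebra
  change x.re • (1 : S) + x.im • s = _
  simp only [Algebra.smul_def, RingHom.algebraMap_toAlgebra, mul_one]

theorem quadraticLift_algebraMap (g : B →+* S) {s : S} (hs : s * s = g a + g b * s) (u : B) :
    quadraticLift g s hs (algebraMap B (QuadraticAlgebra B a b) u) = g u := by
  simp [quadraticLift_apply]

theorem quadraticLift_omega (g : B →+* S) {s : S} (hs : s * s = g a + g b * s) :
    quadraticLift g s hs (QuadraticAlgebra.omega : QuadraticAlgebra B a b) = s := by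
  simp [quadraticLift_apply]

end LiftOfRingHom

section Presentation

open Polynomial

variable {B : Type*} [CommRing B]

theorem aeval_omega_C_mul_X_add_C (a b u v : B) :
    aeval (QuadraticAlgebra.omega : QuadraticAlgebra B a b) (C v * X + C u) = ⟨u, v⟩ := by
  rw [QuadraticAlgebra.mk_eq_add_smul_omega, add_comm]
  simp [Algebra.smul_def]

theorem ker_aeval_omega (a b : B) :
    RingHom.ker (aeval (R := B) (QuadraticAlgebra.omega : QuadraticAlgebra B a b)) =
      Ideal.span {X ^ 2 - C b * X - C a} := by
  nontriviality B
  set f : B[X] := X ^ 2 - C b * X - C a with hf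
  have hdegree : f.natDegree = 2 := by rw [hf]; compute_degree!
  have hmonic : f.Monic := by rw [hf]; monicity!
  have hroot : aeval (QuadraticAlgebra.omega : QuadraticAlgebra B a b) f = 0 := by
    simp [hf, pow_two, QuadraticAlgebra.omega_mul_omega_eq_algebraMap]
  ext g
  rw [RingHom.mem_ker, Ideal.mem_span_singleton, ← modByMonic_eq_zero_iff_dvd hmonic]
  have hlt : (g %ₘ f).natDegree < 2 :=
    hdegree ▸ natDegree_modByMonic_lt g hmonic fun h ↦ by simp [h] at hdegree
  obtain ⟨v, u, hvu⟩ := exists_eq_X_add_C_of_natDegree_le_one (Nat.lt_succ_iff.mp hlt)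
  rw [← aeval_modByMonic_eq_self_of_root hroot, hvu, aeval_omega_C_mul_X_add_C]
  constructor
  · intro h
    obtain ⟨rfl, rfl⟩ := QuadraticAlgebra.ext_iff.mp h
    simp
  · intro h
    have hu := congrArg (coeff · 0) h
    have hv := congrArg (coeff · 1) h
    exact QuadraticAlgebra.ext (by simpa using hu) (by simpa using hv)

/-- A quadratic algebra is the quotient of the polynomial ring by the polynomial defining it. -/
def quotientSpanEquivQuadraticAlgebra (a b : B) :
    B[X] ⧸ Ideal.span {X ^ 2 - C b * X - C a} ≃+* QuadraticAlgebra B a b :=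
  (Ideal.quotEquivOfEq (ker_aeval_omega a b).symm).trans <|
    RingHom.quotientKerEquivOfSurjective fun x ↦
      ⟨C x.im * X + C x.re, aeval_omega_C_mul_X_add_C a b x.re x.im⟩

end Presentation

section Homogeneous

variable {σ R S : Type*} [CommSemiring R] [CommSemiring S] [Algebra R S]

theorem degree_eq_of_mem_support {f : MvPolynomial σ R} {n : ℕ} (hf : f.IsHomogeneous n)
    {d : σ →₀ ℕ} (hd : d ∈ f.support) : d.degree = n := by
  by_contra h
  exact MvPolynomial.mem_support_iff.mp hd (hf.coeff_eq_zero h)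

theorem aeval_mul_of_isHomogeneous {f : MvPolynomial σ R} {n : ℕ} (hf : f.IsHomogeneous n)
    (t : S) (x : σ → S) :
    MvPolynomial.aeval (fun i ↦ t * x i) f = t ^ n * MvPolynomial.aeval x f := by
  rw [MvPolynomial.aeval_def, MvPolynomial.aeval_def, MvPolynomial.eval₂_eq,
    MvPolynomial.eval₂_eq, Finset.mul_sum]
  refine Finset.sum_congr rfl fun d hd ↦ ?_
  simp_rw [mul_pow, Finset.prod_mul_distrib, Finset.prod_pow_eq_pow_sum, ← Finsupp.degree_apply,
    degree_eq_of_mem_support hf hd]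
  ring

end Homogeneous

section Dehomogenize

open Polynomial

variable {k : Type*} [CommRing k]

/-- The restriction of a polynomial in two variables to the line where the second variable takes
the value `w`. -/
def restrictLine (w : k) : MvPolynomial (Fin 2) k →ₐ[k] k[X] :=
  MvPolynomial.aeval ![X, C w]

theorem restrictLine_eq_sum (w : k) (f : MvPolynomial (Fin 2) k) :
    restrictLine w f = ∑ d ∈ f.support, C (f.coeff d * w ^ d 1) * X ^ d 0 := by
  rw [restrictLine, MvPolynomial.aeval_def, MvPolynomial.eval₂_eq']
  refine Finset.sum_congr rfl fun d _ ↦ ?_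
  simp [Fin.prod_univ_two, algebraMap_eq]
  ring

theorem natDegree_restrictLine_le {f : MvPolynomial (Fin 2) k} {n : ℕ} (hf : f.IsHomogeneous n)
    (w : k) : (restrictLine w f).natDegree ≤ n := by
  rw [restrictLine_eq_sum]
  refine natDegree_sum_le_of_forall_le _ _ fun d hd ↦ (natDegree_C_mul_X_pow_le _ _).trans ?_
  exact (Finsupp.le_degree 0 d).trans_eq (degree_eq_of_mem_support hf hd)

theorem coeff_restrictLine {f : MvPolynomial (Fin 2) k} {n : ℕ} (hf : f.IsHomogeneous n)
    (w : k) : (restrictLine w f).coeff n = MvPolynomial.eval ![1, 0] f := by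
  rw [restrictLine_eq_sum, MvPolynomial.eval_eq', finsetSum_coeff]
  refine Finset.sum_congr rfl fun d hd ↦ ?_
  have hdeg : n = d 0 + d 1 := by
    rw [← degree_eq_of_mem_support hf hd, Finsupp.degree_eq_sum, Fin.sum_univ_two]
  rcases eq_or_ne (d 1) 0 with h1 | h1
  · simp [Fin.prod_univ_two, h1, hdeg]
  · simp [Fin.prod_univ_two, coeff_C_mul, coeff_X_pow, h1, hdeg, -map_mul]

theorem restrictLine_zero_eq_zero_iff {f : MvPolynomial (Fin 2) k} :
    restrictLine 0 f = 0 ↔ MvPolynomial.X 1 ∣ f := by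
  constructor
  · intro h
    have hsection : (Ideal.Quotient.mkₐ k (Ideal.span {MvPolynomial.X 1})).comp
        ((aeval (MvPolynomial.X 0)).comp (restrictLine (0 : k))) = Ideal.Quotient.mkₐ k _ := by
      refine MvPolynomial.algHom_ext fun i ↦ ?_
      fin_cases i
      · simp [restrictLine]
      · simp [restrictLine]
    have := DFunLike.congr_fun hsection f
    rw [← Ideal.mem_span_singleton, ← Ideal.Quotient.eq_zero_iff_mem]
    simpa [h, eq_comm] using this
  · rintro ⟨g, rfl⟩
    simp [restrictLine]

theorem eq_zero_of_restrictLine_one_eq_zero {f : MvPolynomial (Fin 2) k} {n : ℕ}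
    (hf : f.IsHomogeneous n) (h : restrictLine 1 f = 0) : f = 0 := by
  by_contra hne
  obtain ⟨m, hm⟩ := MvPolynomial.support_nonempty.mpr hne
  have hunique : ∀ d ∈ f.support, d ≠ m → d 0 ≠ m 0 := by
    intro d hd hdm h0
    have hdegree := (degree_eq_of_mem_support hf hd).trans (degree_eq_of_mem_support hf hm).symm
    simp only [Finsupp.degree_eq_sum, Fin.sum_univ_two, h0, add_right_inj] at hdegree
    exact hdm (Finsupp.ext (Fin.forall_fin_two.mpr ⟨h0, hdegree⟩))
  have hcoeff := congrArg (coeff · (m 0)) h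
  simp only [restrictLine_eq_sum, finsetSum_coeff, one_pow, mul_one, coeff_C_mul, coeff_X_pow,
    coeff_zero] at hcoeff
  rw [Finset.sum_eq_single_of_mem m hm fun d hd hdm ↦ by simp [(hunique d hd hdm).symm]] at hcoeff
  exact MvPolynomial.mem_support_iff.mp hm (by simpa using hcoeff)

end Dehomogenize

section Cone

open Polynomial

theorem prime_algebraMap_quadraticAlgebra {B B' : Type*} [CommRing B] [CommRing B'] (g : B →+* B')
    {z : B} (hz : z ≠ 0) (hg : ∀ u, g u = 0 ↔ z ∣ u) (a b : B)
    [IsDomain (QuadraticAlgebra B' (g a) (g b))] :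
    Prime (algebraMap B (QuadraticAlgebra B a b) z) := by
  let reduction : QuadraticAlgebra B a b →+* QuadraticAlgebra B' (g a) (g b) :=
    quadraticLift ((algebraMap B' _).comp g) QuadraticAlgebra.omega
      QuadraticAlgebra.omega_mul_omega_eq_algebraMap
  have hker : RingHom.ker reduction = Ideal.span {algebraMap B _ z} := by
    ext x
    rw [RingHom.mem_ker, Ideal.mem_span_singleton, QuadraticAlgebra.algebraMap_dvd_iff,
      ← hg, ← hg, quadraticLift_apply, QuadraticAlgebra.ext_iff]
    simp
  have hz' : algebraMap B (QuadraticAlgebra B a b) z ≠ 0 := fun h ↦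
    hz (by simpa using congrArg QuadraticAlgebra.re h)
  rw [← Ideal.span_singleton_prime hz', ← hker]
  exact RingHom.ker_isPrime reduction

/-- The subring of the elements carried into the subring `A` by some power of `t ∈ A`. -/
def powSaturation {S : Type*} [CommRing S] (A : Subring S) {t : S} (ht : t ∈ A) : Subring S where
  carrier := {s | ∃ n : ℕ, t ^ n * s ∈ A}
  one_mem' := ⟨0, by simp⟩
  zero_mem' := ⟨0, by simp⟩
  mul_mem' := by
    rintro s s' ⟨n, hs⟩ ⟨n', hs'⟩
    refine ⟨n + n', ?_⟩
    convert A.mul_mem hs hs' using 1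
    ring
  add_mem' := by
    rintro s s' ⟨n, hs⟩ ⟨n', hs'⟩
    refine ⟨n + n', ?_⟩
    convert A.add_mem (A.mul_mem (pow_mem ht n') hs) (A.mul_mem (pow_mem ht n) hs') using 1
    ring
  neg_mem' := by
    rintro s ⟨n, hs⟩
    exact ⟨n, by simpa using hs⟩

theorem le_powSaturation {S : Type*} [CommRing S] (A : Subring S) {t : S} (ht : t ∈ A) :
    A ≤ powSaturation A ht := fun s hs ↦ ⟨0, by simpa using hs⟩

section ConeToCylinder

variable (k : Type*) [CommRing k]

/-- The substitution `x₀ ↦ X * T`, `x₁ ↦ T`, where `T` is the outer variable of `k[X][T]`: it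
dehomogenizes while recording the degree as the exponent of `T`. -/
def gradedDehomogenize : MvPolynomial (Fin 2) k →ₐ[k] k[X][X] :=
  MvPolynomial.aeval fun i ↦ X * C (![X, 1] i)

variable {k}

theorem gradedDehomogenize_of_isHomogeneous {f : MvPolynomial (Fin 2) k} {n : ℕ}
    (hf : f.IsHomogeneous n) : gradedDehomogenize k f = C (restrictLine 1 f) * X ^ n := by
  have hC := MvPolynomial.comp_aeval_apply ![X, 1] (CAlgHom : k[X] →ₐ[k] k[X][X]) f
  rw [CAlgHom_apply] at hC
  rw [gradedDehomogenize, aeval_mul_of_isHomogeneous hf, mul_comm, restrictLine, C_1, hC]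
  rfl

theorem coeff_gradedDehomogenize (f : MvPolynomial (Fin 2) k) (n : ℕ) :
    (gradedDehomogenize k f).coeff n =
      restrictLine 1 (MvPolynomial.homogeneousComponent n f) := by
  conv_lhs => rw [← MvPolynomial.sum_homogeneousComponent f, map_sum, finsetSum_coeff]
  simp_rw [gradedDehomogenize_of_isHomogeneous
    (MvPolynomial.homogeneousComponent_isHomogeneous _ f), coeff_C_mul_X_pow, Finset.sum_ite_eq]
  refine ite_eq_left_iff.mpr fun hn ↦ ?_
  rw [MvPolynomial.homogeneousComponent_eq_zero _ _ (by simpa using hn), map_zero]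

theorem gradedDehomogenize_injective : Function.Injective (gradedDehomogenize k) := by
  rw [injective_iff_map_eq_zero]
  intro f hf
  rw [← MvPolynomial.sum_homogeneousComponent f]
  refine Finset.sum_eq_zero fun n _ ↦ ?_
  refine eq_zero_of_restrictLine_one_eq_zero
    (MvPolynomial.homogeneousComponent_isHomogeneous n f) ?_
  rw [← coeff_gradedDehomogenize, hf, coeff_zero]

variable {P Q : MvPolynomial (Fin 2) k}

/-- The cone `y² = P + Q * y` over the affine conic obtained by setting `x₁ = 1`, mapped to the
cylinder over this conic by `x₀ ↦ X * T`, `x₁ ↦ T`, `y ↦ y * T`. -/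
def coneToCylinder (hP : P.IsHomogeneous 2) (hQ : Q.IsHomogeneous 1) :
    QuadraticAlgebra (MvPolynomial (Fin 2) k) P Q →+*
      (QuadraticAlgebra k[X] (restrictLine 1 P) (restrictLine 1 Q))[X] :=
  quadraticLift ((mapRingHom (algebraMap k[X] _)).comp (gradedDehomogenize k).toRingHom)
    (C QuadraticAlgebra.omega * X) <| by
      have homega := congrArg C (QuadraticAlgebra.omega_mul_omega_eq_algebraMap
        (a := restrictLine 1 P) (b := restrictLine 1 Q))
      simp only [map_mul, map_add] at homega
      simp only [AlgHom.toRingHom_eq_coe, RingHom.coe_comp, RingHom.coe_coe, Function.comp_apply,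
        coe_mapRingHom, gradedDehomogenize_of_isHomogeneous hP,
        gradedDehomogenize_of_isHomogeneous hQ, Polynomial.map_mul, Polynomial.map_pow, map_C,
        map_X]
      linear_combination X ^ 2 * homega

theorem coeff_coneToCylinder (hP : P.IsHomogeneous 2) (hQ : Q.IsHomogeneous 1)
    (x : QuadraticAlgebra (MvPolynomial (Fin 2) k) P Q) (n : ℕ) :
    (coneToCylinder hP hQ x).coeff n =
      ⟨(gradedDehomogenize k x.re).coeff n, (gradedDehomogenize k x.im * X).coeff n⟩ := by
  let ι := algebraMap k[X] (QuadraticAlgebra k[X] (restrictLine 1 P) (restrictLine 1 Q))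
  have hx : coneToCylinder hP hQ x = (gradedDehomogenize k x.re).map ι +
      (gradedDehomogenize k x.im * X).map ι * C QuadraticAlgebra.omega := by
    rw [coneToCylinder, quadraticLift_apply, Polynomial.map_mul, map_X, mul_assoc, mul_comm X]
    rfl
  rw [hx, coeff_add, coeff_mul_C, coeff_map, coeff_map, QuadraticAlgebra.mk_eq_add_smul_omega,
    Algebra.smul_def]

theorem coneToCylinder_injective (hP : P.IsHomogeneous 2) (hQ : Q.IsHomogeneous 1) :
    Function.Injective (coneToCylinder hP hQ) := by
  rw [injective_iff_map_eq_zero]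
  intro x hx
  have hcoeff (n : ℕ) := (coeff_coneToCylinder hP hQ x n).symm.trans (congrArg (coeff · n) hx)
  refine QuadraticAlgebra.ext ?_ ?_
  · refine (injective_iff_map_eq_zero _).mp gradedDehomogenize_injective _ ?_
    ext1 n
    simpa using congrArg QuadraticAlgebra.re (hcoeff n)
  · refine (injective_iff_map_eq_zero _).mp gradedDehomogenize_injective _ ?_
    ext1 n
    simpa using congrArg QuadraticAlgebra.im (hcoeff (n + 1))

theorem coneToCylinder_X_one (hP : P.IsHomogeneous 2) (hQ : Q.IsHomogeneous 1) :
    coneToCylinder hP hQ (algebraMap (MvPolynomial (Fin 2) k) _ (MvPolynomial.X 1)) = X := by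
  simp [coneToCylinder, quadraticLift_algebraMap, gradedDehomogenize]

theorem exists_coneToCylinder_eq_X_pow_mul (hP : P.IsHomogeneous 2) (hQ : Q.IsHomogeneous 1)
    (s : (QuadraticAlgebra k[X] (restrictLine 1 P) (restrictLine 1 Q))[X]) :
    ∃ n r, coneToCylinder hP hQ r = X ^ n * s := by
  have hX : X ∈ (coneToCylinder hP hQ).range := ⟨_, coneToCylinder_X_one hP hQ⟩
  let ι := algebraMap (MvPolynomial (Fin 2) k) (QuadraticAlgebra (MvPolynomial (Fin 2) k) P Q)
  let A := powSaturation (coneToCylinder hP hQ).range hX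
  suffices s ∈ A from this
  have homega : C QuadraticAlgebra.omega ∈ A :=
    ⟨1, QuadraticAlgebra.omega, by simp [coneToCylinder, quadraticLift_omega]⟩
  have hpoly (p : k[X]) : C (algebraMap _ _ p) ∈ A := by
    induction p using Polynomial.induction_on' with
    | add p q hp hq => simpa only [map_add] using A.add_mem hp hq
    | monomial n c =>
      rw [← C_mul_X_pow_eq_monomial, map_mul, map_pow, C_mul, C_pow]
      refine A.mul_mem (le_powSaturation _ hX ⟨ι (MvPolynomial.C c), ?_⟩)
        (A.pow_mem ⟨1, ι (MvPolynomial.X 0), ?_⟩ n)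
      · simp [ι, coneToCylinder, quadraticLift_algebraMap]
      · simp [ι, coneToCylinder, quadraticLift_algebraMap, gradedDehomogenize]
  have hC (d : QuadraticAlgebra k[X] (restrictLine 1 P) (restrictLine 1 Q)) : C d ∈ A := by
    rw [← QuadraticAlgebra.mk_eta d, QuadraticAlgebra.mk_eq_add_smul_omega, Algebra.smul_def,
      C_add, C_mul]
    exact A.add_mem (hpoly _) (A.mul_mem (hpoly _) homega)
  induction s using Polynomial.induction_on' with
  | add p q hp hq => exact A.add_mem hp hq
  | monomial n c =>
    rw [← C_mul_X_pow_eq_monomial]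
    exact A.mul_mem (hC c) (A.pow_mem (le_powSaturation _ hX hX) n)

end ConeToCylinder

end Cone

section AnisotropicCone

open Polynomial

variable {k : Type*} [Field k] {P Q : MvPolynomial (Fin 2) k}

theorem isDomain_quadraticAlgebra_restrictLine (hP : P.IsHomogeneous 2) (hQ : Q.IsHomogeneous 1)
    (hinf : ∀ s : k, s ^ 2 ≠ MvPolynomial.eval ![1, 0] P + MvPolynomial.eval ![1, 0] Q * s)
    (w : k) : IsDomain (QuadraticAlgebra k[X] (restrictLine w P) (restrictLine w Q)) := by
  refine isDomain_affineConic (natDegree_restrictLine_le hP w) (natDegree_restrictLine_le hQ w) ?_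
  rwa [coeff_restrictLine hP, coeff_restrictLine hQ]

theorem exists_sq_eq_of_algHom_restrictLine {w : k}
    (χ : QuadraticAlgebra k[X] (restrictLine w P) (restrictLine w Q) →ₐ[k] k) :
    ∃ x s : k, s ^ 2 = MvPolynomial.eval ![x, w] P + MvPolynomial.eval ![x, w] Q * s := by
  let τ : k[X] →ₐ[k] k := χ.comp (IsScalarTower.toAlgHom k k[X] _)
  have hτ (u : MvPolynomial (Fin 2) k) : τ (restrictLine w u) = MvPolynomial.eval ![τ X, w] u := by
    have : τ.comp (restrictLine w) = MvPolynomial.aeval ![τ X, w] := by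
      refine MvPolynomial.algHom_ext fun i ↦ ?_
      fin_cases i
      · simp [restrictLine]
      · simpa [restrictLine] using τ.commutes w
    rw [← MvPolynomial.coe_aeval_eq_eval, RingHom.coe_coe, ← this]
    rfl
  refine ⟨τ X, χ QuadraticAlgebra.omega, ?_⟩
  rw [← hτ, ← hτ, ← map_pow, pow_two, QuadraticAlgebra.omega_mul_omega_eq_algebraMap, map_add,
    map_mul]
  rfl

theorem isDomain_and_uniqueFactorizationMonoid_cone (hP : P.IsHomogeneous 2)
    (hQ : Q.IsHomogeneous 1)
    (haniso : ∀ (v : Fin 2 → k) (s : k),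
      s ^ 2 = MvPolynomial.eval v P + MvPolynomial.eval v Q * s → v = 0) :
    IsDomain (QuadraticAlgebra (MvPolynomial (Fin 2) k) P Q) ∧
      UniqueFactorizationMonoid (QuadraticAlgebra (MvPolynomial (Fin 2) k) P Q) := by
  have hinf : ∀ s : k, s ^ 2 ≠ MvPolynomial.eval ![1, 0] P + MvPolynomial.eval ![1, 0] Q * s :=
    fun s hs ↦ one_ne_zero (congrFun (haniso _ s hs) 0)
  have haff : IsEmpty (QuadraticAlgebra k[X] (restrictLine 1 P) (restrictLine 1 Q) →ₐ[k] k) := by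
    refine ⟨fun χ ↦ ?_⟩
    obtain ⟨x, s, hs⟩ := exists_sq_eq_of_algHom_restrictLine χ
    exact one_ne_zero (congrFun (haniso _ s hs) 1)
  have := isDomain_quadraticAlgebra_restrictLine hP hQ hinf 0
  have := isDomain_quadraticAlgebra_restrictLine hP hQ hinf 1
  have : IsPrincipalIdealRing (QuadraticAlgebra k[X] (restrictLine 1 P) (restrictLine 1 Q)) := by
    refine isPrincipalIdealRing_affineConic (natDegree_restrictLine_le hP 1)
      (natDegree_restrictLine_le hQ 1) ?_ haff
    rwa [coeff_restrictLine hP, coeff_restrictLine hQ]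
  have hdomain := (coneToCylinder_injective hP hQ).isDomain
  have : IsNoetherianRing (QuadraticAlgebra (MvPolynomial (Fin 2) k) P Q) :=
    IsNoetherianRing.of_finite (MvPolynomial (Fin 2) k) _
  have hprime : Prime (algebraMap (MvPolynomial (Fin 2) k) (QuadraticAlgebra _ P Q)
      (MvPolynomial.X 1)) :=
    prime_algebraMap_quadraticAlgebra (restrictLine (0 : k)).toRingHom (MvPolynomial.X_ne_zero 1)
      (fun _ ↦ restrictLine_zero_eq_zero_iff) P Q
  refine ⟨hdomain, uniqueFactorizationMonoid_of_injective_of_prime _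
    (coneToCylinder_injective hP hQ) hprime ?_⟩
  simpa only [coneToCylinder_X_one] using exists_coneToCylinder_eq_X_pow_mul hP hQ

end AnisotropicCone

section Reduction

open Polynomial

variable {k : Type*} [Field k] {n : ℕ}

theorem exists_finSuccEquiv_eq_C_mul {f : MvPolynomial (Fin (n + 1)) k} (hf : f.IsHomogeneous 2)
    (hpoint : MvPolynomial.eval (Fin.cons 1 0) f ≠ 0) :
    ∃ (c : k) (P Q : MvPolynomial (Fin n) k), c ≠ 0 ∧ P.IsHomogeneous 2 ∧ Q.IsHomogeneous 1 ∧
      MvPolynomial.finSuccEquiv k n f = C (MvPolynomial.C c) * (X ^ 2 - C Q * X - C P) := by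
  set F := MvPolynomial.finSuccEquiv k n f with hF
  have h0 : (F.coeff 0).IsHomogeneous 2 := hf.finSuccEquiv_coeff_isHomogeneous 0 2 rfl
  have h1 : (F.coeff 1).IsHomogeneous 1 := hf.finSuccEquiv_coeff_isHomogeneous 1 1 rfl
  have h2 : (F.coeff 2).IsHomogeneous 0 := hf.finSuccEquiv_coeff_isHomogeneous 2 0 rfl
  obtain ⟨c, hc⟩ : ∃ c, F.coeff 2 = MvPolynomial.C c :=
    ⟨_, MvPolynomial.totalDegree_eq_zero_iff_eq_C.mp (Nat.le_zero.mp h2.totalDegree_le)⟩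
  have hdegree : F.natDegree < 3 := by
    rw [hF, MvPolynomial.natDegree_finSuccEquiv, Nat.lt_succ_iff]
    exact (MvPolynomial.degreeOf_le_totalDegree f 0).trans hf.totalDegree_le
  have hsum : F = C (F.coeff 0) + C (F.coeff 1) * X + C (MvPolynomial.C c) * X ^ 2 := by
    conv_lhs => rw [as_sum_range_C_mul_X_pow' F hdegree]
    simp [Finset.sum_range_succ, hc]
  have hc0 : c ≠ 0 := by
    rintro rfl
    refine hpoint ?_
    rw [MvPolynomial.eval_eq_eval_mv_eval', ← hF, hsum]
    simp [MvPolynomial.eval_zero, MvPolynomial.constantCoeff_eq, h0.coeff_eq_zero,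
      h1.coeff_eq_zero]
  have hinv : (C (.C c) * C (.C c⁻¹) : (MvPolynomial (Fin n) k)[X]) = 1 := by
    rw [← C_mul, ← MvPolynomial.C_mul, mul_inv_cancel₀ hc0, MvPolynomial.C_1, C_1]
  refine ⟨c, MvPolynomial.C (-c⁻¹) * F.coeff 0, MvPolynomial.C (-c⁻¹) * F.coeff 1, hc0,
    h0.C_mul _, h1.C_mul _, ?_⟩
  refine hsum.trans ?_
  simp only [map_mul, map_neg]
  linear_combination (- C (F.coeff 0) - C (F.coeff 1) * X) * hinv

/-- If `f` is, up to a unit constant, `x₀² - Q * x₀ - P`, then the quotient by `f` is the quadratic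
algebra of `P` and `Q` over the polynomial ring in the other variables. -/
def quotientSpanEquivOfFinSuccEquivEq {f : MvPolynomial (Fin (n + 1)) k} {c : k}
    {P Q : MvPolynomial (Fin n) k} (hc : c ≠ 0)
    (hf : MvPolynomial.finSuccEquiv k n f = C (MvPolynomial.C c) * (X ^ 2 - C Q * X - C P)) :
    MvPolynomial (Fin (n + 1)) k ⧸ Ideal.span {f} ≃+*
      QuadraticAlgebra (MvPolynomial (Fin n) k) P Q :=
  (Ideal.quotientEquiv _ _ (MvPolynomial.finSuccEquiv k n).toRingEquiv <| by
    have hunit : IsUnit (C (MvPolynomial.C c) : (MvPolynomial (Fin n) k)[X]) :=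
      (hc.isUnit.map MvPolynomial.C).map C
    rw [← Ideal.span_singleton_mul_left_unit hunit, ← hf, Ideal.map_span, Set.image_singleton]
    rfl).trans (quotientSpanEquivQuadraticAlgebra P Q)

end Reduction

theorem samuel_class_group_trivial_general {k : Type*} [Field k] {f : MvPolynomial (Fin 3) k}
    (hf : f.IsHomogeneous 2) (hsol : ∀ v : Fin 3 → k, MvPolynomial.eval v f = 0 → v = 0) :
    Subsingleton (DivClassGroup (MvPolynomial (Fin 3) k ⧸ Ideal.span {f})) := by
  have hpoint : MvPolynomial.eval (Fin.cons 1 0) f ≠ 0 := fun h ↦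
    one_ne_zero (congrFun (hsol _ h) 0)
  obtain ⟨c, P, Q, hc, hP, hQ, hF⟩ := exists_finSuccEquiv_eq_C_mul hf hpoint
  have haniso (v : Fin 2 → k) (s : k)
      (hs : s ^ 2 = MvPolynomial.eval v P + MvPolynomial.eval v Q * s) : v = 0 := by
    have hzero : MvPolynomial.eval (Fin.cons s v) f = 0 := by
      simp [MvPolynomial.eval_eq_eval_mv_eval', hF, hs]
    funext i
    exact congrFun (hsol _ hzero) i.succ
  obtain ⟨_, _⟩ := isDomain_and_uniqueFactorizationMonoid_cone hP hQ haniso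
  let e := quotientSpanEquivOfFinSuccEquivEq hc hF
  have := e.toMulEquiv.isDomain
  have := e.symm.toMulEquiv.uniqueFactorizationMonoid inferInstance
  exact subsingleton_divClassGroup_of_uniqueFactorizationMonoid _

/-- **Samuel's theorem** (Proposition 2.2).  Let `k` be a field of characteristic not `2` and
let `f ∈ k[x₁,x₂,x₃]` be a homogeneous polynomial of degree `2` whose associated quadratic form
`Q` (so `f(v) = Q v`) is non-degenerate.  If `f = 0` has no non-trivial solution in `k`, then
the divisor class group of `R = k[x₁,x₂,x₃]/(f)` is trivial. -/
theorem samuel_class_group_trivial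
    (k : Type) [Field k] (hchar : ringChar k ≠ 2)
    (f : MvPolynomial (Fin 3) k) (hf : f.IsHomogeneous 2)
    (Q : QuadraticForm k (Fin 3 → k))
    (hfQ : ∀ v : Fin 3 → k, MvPolynomial.eval v f = Q v)
    (hnd : Q.polarBilin.Nondegenerate)
    (hsol : ∀ v : Fin 3 → k, MvPolynomial.eval v f = 0 → v = 0) :
    Subsingleton (DivClassGroup (MvPolynomial (Fin 3) k ⧸ Ideal.span {f})) :=
  samuel_class_group_trivial_general hf hsol
end
end

section
/- Let S = ⊕_{n≥0} Sₙ be a commutative Noetherian graded ring with S₀ a field, let S₊ = ⊕_{n>0} Sₙ be the irrelevant ideal, and let A = S_{S₊} be the localization of S at S₊. Then the map of Grothendieck groups G(S) → G(A) induced by localization is an isomorphism. (Kamoi–Kurano; Proposition 2.3.) -/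
/-!
Kamoi–Kurano (Proposition 2.3): for a Noetherian graded ring `S = ⊕_{n≥0} Sₙ` over a field `S₀`,
with irrelevant ideal `S₊` and `A = S_{S₊}`, the localization map `G(S) → G(A)` is an
isomorphism of Grothendieck groups.
-/

universe u

/-- A bundled finitely generated module over `R`. -/
structure FGModuleRep (R : Type u) [CommRing R] : Type (u + 1) where
  carrier : Type u
  [isAddCommGroup : AddCommGroup carrier]
  [isModule : Module R carrier]
  [isFinite : Module.Finite R carrier]

attribute [instance] FGModuleRep.isAddCommGroup FGModuleRep.isModule FGModuleRep.isFinite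

variable (R : Type u) [CommRing R]

/-- The subgroup of relations coming from short exact sequences of f.g. modules. -/
def sesRelations : AddSubgroup (FreeAbelianGroup (FGModuleRep R)) :=
  AddSubgroup.closure
    { z | ∃ (M₁ M₂ M₃ : FGModuleRep R) (f : M₁.carrier →ₗ[R] M₂.carrier)
        (g : M₂.carrier →ₗ[R] M₃.carrier),
        Function.Injective f ∧ Function.Surjective g ∧
        LinearMap.range f = LinearMap.ker g ∧
        z = FreeAbelianGroup.of M₂ - FreeAbelianGroup.of M₁ - FreeAbelianGroup.of M₃ }

/-- The Grothendieck group of finitely generated `R`-modules. -/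
def GGroup : Type (u + 1) :=
  FreeAbelianGroup (FGModuleRep R) ⧸ sesRelations R

noncomputable instance : AddCommGroup (GGroup R) :=
  QuotientAddGroup.Quotient.addCommGroup _

/-- The class of a finitely generated module in the Grothendieck group. -/
def GGroup.cls (M : Type u) [AddCommGroup M] [Module R M] [Module.Finite R M] : GGroup R :=
  QuotientAddGroup.mk (FreeAbelianGroup.of ⟨M⟩)

open TensorProduct

/-!
Let `M` be a finitely generated `S`-module killed by an element `b` whose degree-zero part is `1`.
Let each `s` of degree `n` act on `M[X]` as `s Xⁿ`, and let `L ⊆ M[X]` be the `S[X]`-submodule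
generated by finitely many generators of `M`. The homogenization `∑ bₙ X^(N - n)` is a monic
polynomial which acts on `M[X]` as `X^N b = 0`, so `L` is finitely generated over `S` itself.
Evaluation at `X = 1` gives an exact sequence `0 → L → L → M → 0` whose first map is
multiplication by `X - 1`, whence `[M] = [L] - [L] = 0`.

Consequently `[M]` depends only on the localization of `M`, and sending an `A`-module to the class
of any finitely generated `S`-submodule spanning it inverts the localization map.
-/

namespace GGroup

variable {R} {G : Type*} [AddCommGroup G]

section Exact

variable {M₁ M₂ M₃ : Type u} [AddCommGroup M₁] [AddCommGroup M₂] [AddCommGroup M₃]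
  [Module R M₁] [Module R M₂] [Module R M₃]
  [Module.Finite R M₁] [Module.Finite R M₂] [Module.Finite R M₃]

theorem cls_eq_add_of_exact {f : M₁ →ₗ[R] M₂} {g : M₂ →ₗ[R] M₃} (hf : Function.Injective f)
    (hfg : Function.Exact f g) (hg : Function.Surjective g) :
    cls R M₂ = cls R M₁ + cls R M₃ := by
  have hrel : FreeAbelianGroup.of ⟨M₂⟩ - FreeAbelianGroup.of ⟨M₁⟩ - FreeAbelianGroup.of ⟨M₃⟩ ∈
      sesRelations R :=
    AddSubgroup.subset_closure ⟨⟨M₁⟩, ⟨M₂⟩, ⟨M₃⟩, f, g, hf, hg, hfg.linearMap_ker_eq.symm, rfl⟩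
  have hzero : cls R M₂ - cls R M₁ - cls R M₃ = 0 := (QuotientAddGroup.eq_zero_iff _).2 hrel
  rwa [sub_sub, sub_eq_zero] at hzero

theorem cls_eq_zero_of_subsingleton [Subsingleton M₁] : cls R M₁ = 0 := by
  simpa using cls_eq_add_of_exact (f := (0 : M₁ →ₗ[R] M₁)) (g := (0 : M₁ →ₗ[R] M₁))
    (Function.injective_of_subsingleton _) (fun _ ↦ by simp [Subsingleton.elim _ (0 : M₁)])
    (Function.surjective_to_subsingleton _)

theorem cls_congr (e : M₁ ≃ₗ[R] M₂) : cls R M₁ = cls R M₂ := by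
  have hexact : Function.Exact e.toLinearMap (0 : M₂ →ₗ[R] PUnit.{u + 1}) := fun y ↦
    ⟨fun _ ↦ e.surjective y, fun _ ↦ rfl⟩
  rw [cls_eq_add_of_exact e.injective hexact (Function.surjective_to_subsingleton _),
    cls_eq_zero_of_subsingleton (M₁ := PUnit), add_zero]

end Exact

/-- The universal property of the Grothendieck group: an invariant of finitely generated modules
that is additive on short exact sequences extends to a group homomorphism. -/
noncomputable def lift
    (F : ∀ (M : Type u) [AddCommGroup M] [Module R M] [Module.Finite R M], G)
    (hF : ∀ {M₁ M₂ M₃ : Type u} [AddCommGroup M₁] [AddCommGroup M₂] [AddCommGroup M₃]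
      [Module R M₁] [Module R M₂] [Module R M₃]
      [Module.Finite R M₁] [Module.Finite R M₂] [Module.Finite R M₃]
      (f : M₁ →ₗ[R] M₂) (g : M₂ →ₗ[R] M₃), Function.Injective f → Function.Exact f g →
      Function.Surjective g → F M₂ = F M₁ + F M₃) : GGroup R →+ G :=
  QuotientAddGroup.lift (sesRelations R) (FreeAbelianGroup.lift fun M ↦ F M.carrier) <| by
    refine (AddSubgroup.closure_le (AddMonoidHom.ker _)).2 ?_
    rintro _ ⟨M₁, M₂, M₃, f, g, hf, hg, hfg, rfl⟩
    simp [AddMonoidHom.mem_ker, hF f g hf (LinearMap.exact_iff.2 hfg.symm) hg]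

variable {M : Type u} [AddCommGroup M] [Module R M] [Module.Finite R M]

theorem lift_cls (F : ∀ (M : Type u) [AddCommGroup M] [Module R M] [Module.Finite R M], G) (hF) :
    lift F hF (cls R M) = F M :=
  FreeAbelianGroup.lift_apply_of _ _

theorem hom_ext {φ ψ : GGroup R →+ G}
    (h : ∀ (M : Type u) [AddCommGroup M] [Module R M] [Module.Finite R M],
      φ (cls R M) = ψ (cls R M)) : φ = ψ :=
  QuotientAddGroup.addMonoidHom_ext _ (FreeAbelianGroup.lift_ext _ _ fun M ↦ h M.carrier)

variable (A : Type u) [CommRing A] [Algebra R A] [Module.Flat R A]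

variable (R) in
/-- Extension of scalars `[M] ↦ [A ⊗ M]` along a flat ring homomorphism `R → A`. -/
noncomputable def baseChange : GGroup R →+ GGroup A :=
  lift (fun M ↦ cls A (A ⊗[R] M)) fun f g hf hfg hg ↦
    cls_eq_add_of_exact (f := f.baseChange A) (g := g.baseChange A)
      (Module.Flat.lTensor_preserves_injective_linearMap f hf) (lTensor_exact A hfg hg)
      (LinearMap.lTensor_surjective A hg)

theorem baseChange_cls : baseChange R A (cls R M) = cls A (A ⊗[R] M) :=
  lift_cls _ _

end GGroup

section Lattice

variable {R N N' : Type*} [CommRing R] (T : Submonoid R) [AddCommGroup N] [AddCommGroup N']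
  [Module R N] [Module R N']

variable {T} in
theorem isLocalizedModule_subtype_iff [IsLocalizedModule T (LinearMap.id : N →ₗ[R] N)]
    {L : Submodule R N} : IsLocalizedModule T L.subtype ↔ ∀ x, ∃ s : T, s • x ∈ L := by
  refine ⟨fun _ x ↦ ?_, fun h ↦ ⟨IsLocalizedModule.map_units LinearMap.id, fun x ↦ ?_, ?_⟩⟩
  · obtain ⟨⟨y, s⟩, hs⟩ := IsLocalizedModule.surj T L.subtype x
    exact ⟨s, hs ▸ y.2⟩
  · obtain ⟨s, hs⟩ := h x
    exact ⟨⟨⟨s • x, hs⟩, s⟩, rfl⟩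
  · exact fun hxy ↦ ⟨1, by rw [Subtype.ext hxy]⟩

section Functoriality

variable [IsLocalizedModule T (LinearMap.id : N →ₗ[R] N)]
  [IsLocalizedModule T (LinearMap.id : N' →ₗ[R] N')]

theorem isLocalizedModule_subtype_comap (f : N →ₗ[R] N') (L : Submodule R N')
    [IsLocalizedModule T L.subtype] : IsLocalizedModule T (L.comap f).subtype :=
  isLocalizedModule_subtype_iff.2 fun x ↦ by
    obtain ⟨s, hs⟩ := isLocalizedModule_subtype_iff.1 ‹IsLocalizedModule T L.subtype› (f x)
    exact ⟨s, Submodule.mem_comap.2 (LinearMap.map_smul_of_tower f s x ▸ hs)⟩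

theorem isLocalizedModule_subtype_map {g : N →ₗ[R] N'} (hg : Function.Surjective g)
    (L : Submodule R N) [IsLocalizedModule T L.subtype] :
    IsLocalizedModule T (L.map g).subtype :=
  isLocalizedModule_subtype_iff.2 fun z ↦ by
    obtain ⟨y, rfl⟩ := hg z
    obtain ⟨s, hs⟩ := isLocalizedModule_subtype_iff.1 ‹IsLocalizedModule T L.subtype› y
    exact ⟨s, s • y, hs, LinearMap.map_smul_of_tower g s y⟩

end Functoriality

theorem exists_fg_isLocalizedModule_subtype (A : Type*) [CommRing A] [Algebra R A]
    [IsLocalization T A] [Module A N] [IsScalarTower R A N] [Module.Finite A N] :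
    ∃ L : Submodule R N, L.FG ∧ IsLocalizedModule T L.subtype := by
  obtain ⟨g, hg⟩ := Module.Finite.fg_top (R := A) (M := N)
  have := isLocalizedModule_id T N A
  refine ⟨Submodule.span R g, ⟨g, rfl⟩, isLocalizedModule_subtype_iff.2 fun x ↦ ?_⟩
  have hx : x ∈ Submodule.span A (g : Set N) := hg ▸ Submodule.mem_top
  exact multiple_mem_span_of_mem_localization_span T A (g : Set N) x hx

end Lattice

namespace GGroup

variable {R}

/-- Every finitely generated `T`-torsion module has class zero in the Grothendieck group; this is
what makes `[M]` depend only on the localization of `M` at `T`. -/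
def TorsionClassesVanish (T : Submonoid R) : Prop :=
  ∀ (M : Type u) [AddCommGroup M] [Module R M] [Module.Finite R M],
    Module.IsTorsion' M T → cls R M = 0

namespace TorsionClassesVanish

variable [IsNoetherianRing R] {T : Submonoid R} (hT : TorsionClassesVanish T)

include hT

theorem cls_eq_of_isTorsion {M M' : Type u} [AddCommGroup M] [AddCommGroup M'] [Module R M]
    [Module R M'] [Module.Finite R M] [Module.Finite R M'] (h : M →ₗ[R] M')
    (hker : Module.IsTorsion' (LinearMap.ker h) T)
    (hcoker : Module.IsTorsion' (M' ⧸ LinearMap.range h) T) : cls R M = cls R M' := by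
  have hsource : cls R M = cls R (LinearMap.ker h) + cls R (LinearMap.range h) :=
    cls_eq_add_of_exact (Submodule.injective_subtype _)
      (LinearMap.exact_iff.2 (by rw [LinearMap.ker_rangeRestrict, Submodule.range_subtype]))
      h.surjective_rangeRestrict
  have htarget : cls R M' = cls R (LinearMap.range h) + cls R (M' ⧸ LinearMap.range h) :=
    cls_eq_add_of_exact (Submodule.injective_subtype _)
      (LinearMap.exact_subtype_mkQ _) (Submodule.mkQ_surjective _)
  rw [hsource, htarget, hT _ hker, hT _ hcoker, zero_add, add_zero]

theorem cls_eq_of_isLocalizedModule {M M' N : Type u} [AddCommGroup M] [AddCommGroup M']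
    [AddCommGroup N] [Module R M] [Module R M'] [Module R N] [Module.Finite R M]
    [Module.Finite R M'] (f : M →ₗ[R] N) (f' : M' →ₗ[R] N) [IsLocalizedModule T f]
    [IsLocalizedModule T f'] : cls R M = cls R M' := by
  have := Module.finitePresentation_of_finite R M
  obtain ⟨h, s, hs⟩ := Module.FinitePresentation.exists_lift_of_isLocalizedModule T f' f
  have f'_h (m : M) : f' (h m) = s • f m := LinearMap.congr_fun hs m
  refine hT.cls_eq_of_isTorsion h (fun ⟨m, hm⟩ ↦ ?_) fun x ↦ ?_
  · have hfm : f m = 0 := IsLocalizedModule.smul_injective f s <| by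
      simp only [← f'_h, LinearMap.mem_ker.1 hm, map_zero, smul_zero]
    obtain ⟨t, ht⟩ := (IsLocalizedModule.eq_zero_iff T f).1 hfm
    exact ⟨t, Subtype.ext ht⟩
  · obtain ⟨m', rfl⟩ := Submodule.mkQ_surjective _ x
    obtain ⟨⟨m, t⟩, hmt⟩ := IsLocalizedModule.surj T f (f' m')
    have heq : f' ((s * t) • m') = f' (h m) := by
      rw [f'_h, ← hmt, mul_smul, LinearMap.map_smul_of_tower, LinearMap.map_smul_of_tower]
    obtain ⟨c, hc⟩ := IsLocalizedModule.exists_of_eq (S := T) heq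
    have hmem : (c * (s * t)) • m' ∈ LinearMap.range h := by
      rw [mul_smul, hc]
      exact ⟨c • m, LinearMap.map_smul_of_tower h c m⟩
    exact ⟨c * (s * t), (Submodule.Quotient.mk_eq_zero _).2 hmem⟩

end TorsionClassesVanish

theorem cls_eq_cls_comap_add_cls_map {N₁ N₂ N₃ : Type u} [AddCommGroup N₁] [AddCommGroup N₂]
    [AddCommGroup N₃] [Module R N₁] [Module R N₂] [Module R N₃] {f : N₁ →ₗ[R] N₂}
    {g : N₂ →ₗ[R] N₃} (hf : Function.Injective f) (hfg : Function.Exact f g)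
    (L : Submodule R N₂) [Module.Finite R L] [Module.Finite R (L.comap f)] :
    cls R L = cls R (L.comap f) + cls R (L.map g) := by
  refine cls_eq_add_of_exact (f := f.submoduleComap L) (g := g.submoduleMap L)
    (fun x y hxy ↦ Subtype.ext (hf (congrArg Subtype.val hxy))) (fun x ↦ ?_)
    (g.submoduleMap_surjective L)
  refine Subtype.ext_iff.trans ((hfg x).trans ⟨?_, ?_⟩)
  · rintro ⟨y, hy⟩
    exact ⟨⟨y, Submodule.mem_comap.2 (hy ▸ x.2)⟩, Subtype.ext hy⟩
  · rintro ⟨y, rfl⟩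
    exact ⟨y, rfl⟩

namespace TorsionClassesVanish

variable [IsNoetherianRing R] {T : Submonoid R} (hT : TorsionClassesVanish T)
  (A : Type u) [CommRing A] [Algebra R A] [IsLocalization T A]

include hT in
theorem exists_forall_cls_eq (N : Type u) [AddCommGroup N] [Module A N] [Module.Finite A N] :
    ∃ c : GGroup R, ∀ (M : Type u) [AddCommGroup M] [Module R M] [Module.Finite R M]
      [Module R N] [IsScalarTower R A N] (f : M →ₗ[R] N) [IsLocalizedModule T f],
      cls R M = c := by
  let restricted : Module R N := Module.compHom N (algebraMap R A)
  have : IsScalarTower R A N := IsScalarTower.of_algebraMap_smul fun _ _ ↦ rfl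
  obtain ⟨L, hL, _⟩ := exists_fg_isLocalizedModule_subtype T A (N := N)
  have : Module.Finite R L := Module.Finite.iff_fg.2 hL
  refine ⟨cls R L, fun M _ _ _ instN _ f _ ↦ ?_⟩
  obtain rfl : instN = restricted :=
    Module.ext' _ _ fun r x ↦ (algebraMap_smul A r x).symm
  exact hT.cls_eq_of_isLocalizedModule f L.subtype

/-- The common class of all finitely generated `R`-modules whose localization at `T` is the
`A`-module `N`. -/
noncomputable def latticeClass (N : Type u) [AddCommGroup N] [Module A N] [Module.Finite A N] :
    GGroup R :=
  (hT.exists_forall_cls_eq A N).choose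

theorem latticeClass_eq {M N : Type u} [AddCommGroup M] [AddCommGroup N] [Module R M]
    [Module R N] [Module A N] [IsScalarTower R A N] [Module.Finite R M] [Module.Finite A N]
    (f : M →ₗ[R] N) [IsLocalizedModule T f] : hT.latticeClass A N = cls R M :=
  ((hT.exists_forall_cls_eq A N).choose_spec M f).symm

theorem latticeClass_eq_add_of_exact {N₁ N₂ N₃ : Type u} [AddCommGroup N₁] [AddCommGroup N₂]
    [AddCommGroup N₃] [Module A N₁] [Module A N₂] [Module A N₃] [Module.Finite A N₁]
    [Module.Finite A N₂] [Module.Finite A N₃] (f : N₁ →ₗ[A] N₂) (g : N₂ →ₗ[A] N₃)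
    (hf : Function.Injective f) (hfg : Function.Exact f g) (hg : Function.Surjective g) :
    hT.latticeClass A N₂ = hT.latticeClass A N₁ + hT.latticeClass A N₃ := by
  let _ (N : Type u) [AddCommGroup N] [Module A N] : Module R N :=
    Module.compHom N (algebraMap R A)
  have (N : Type u) [AddCommGroup N] [Module A N] : IsScalarTower R A N :=
    IsScalarTower.of_algebraMap_smul fun _ _ ↦ rfl
  have (N : Type u) [AddCommGroup N] [Module A N] := isLocalizedModule_id T N A
  obtain ⟨L, hL, hLN⟩ := exists_fg_isLocalizedModule_subtype T A (N := N₂)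
  let fR := f.restrictScalars R
  let gR := g.restrictScalars R
  have : Module.Finite R L := Module.Finite.iff_fg.2 hL
  have : Module.Finite R (L.comap fR) := Module.Finite.of_injective (fR.submoduleComap L)
    fun x y hxy ↦ Subtype.ext (hf (congrArg Subtype.val hxy))
  have := isLocalizedModule_subtype_comap T fR L
  have := isLocalizedModule_subtype_map T hg L (g := gR)
  rw [hT.latticeClass_eq A L.subtype, hT.latticeClass_eq A (L.comap fR).subtype,
    hT.latticeClass_eq A (L.map gR).subtype,
    cls_eq_cls_comap_add_cls_map (f := fR) (g := gR) hf hfg L]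

/-- The inverse of localization: `[N]` is sent to the class of a lattice in `N`. -/
noncomputable def latticeHom : GGroup A →+ GGroup R :=
  lift (hT.latticeClass A) (hT.latticeClass_eq_add_of_exact A)

theorem latticeHom_cls (N : Type u) [AddCommGroup N] [Module A N] [Module.Finite A N] :
    hT.latticeHom A (cls A N) = hT.latticeClass A N :=
  lift_cls _ _

theorem latticeHom_comp_baseChange [Module.Flat R A] :
    (hT.latticeHom A).comp (baseChange R A) = AddMonoidHom.id (GGroup R) :=
  hom_ext fun M _ _ _ ↦ by
    rw [AddMonoidHom.comp_apply, baseChange_cls, latticeHom_cls,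
      hT.latticeClass_eq A (TensorProduct.mk R A M 1), AddMonoidHom.id_apply]

theorem baseChange_comp_latticeHom [Module.Flat R A] :
    (baseChange R A).comp (hT.latticeHom A) = AddMonoidHom.id (GGroup A) :=
  hom_ext fun N _ _ _ ↦ by
    let _ : Module R N := Module.compHom N (algebraMap R A)
    have : IsScalarTower R A N := IsScalarTower.of_algebraMap_smul fun _ _ ↦ rfl
    obtain ⟨L, hL, hLN⟩ := exists_fg_isLocalizedModule_subtype T A (N := N)
    have : Module.Finite R L := Module.Finite.iff_fg.2 hL
    have hbase : IsBaseChange A L.subtype := (isLocalizedModule_iff_isBaseChange T A _).1 hLN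
    rw [AddMonoidHom.comp_apply, latticeHom_cls, hT.latticeClass_eq A L.subtype, baseChange_cls,
      cls_congr hbase.equiv, AddMonoidHom.id_apply]

/-- If the classes of `T`-torsion modules vanish, localization at `T` is an isomorphism of
Grothendieck groups. -/
noncomputable def localizationEquiv : GGroup R ≃+ GGroup A :=
  have := IsLocalization.flat A T
  (baseChange R A).toAddEquiv (hT.latticeHom A) (hT.latticeHom_comp_baseChange A)
    (hT.baseChange_comp_latticeHom A)

theorem localizationEquiv_cls (M : Type u) [AddCommGroup M] [Module R M] [Module.Finite R M] :
    hT.localizationEquiv A (cls R M) = cls A (A ⊗[R] M) :=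
  have := IsLocalization.flat A T
  baseChange_cls A

end TorsionClassesVanish

end GGroup

section Polynomial

open Polynomial

theorem finite_of_monic_smul_eq_zero {R L : Type*} [CommRing R] [AddCommGroup L] [Module R L]
    [Module R[X] L] [IsScalarTower R R[X] L] [Module.Finite R[X] L] {P : R[X]} (hP : P.Monic)
    (hPL : ∀ x : L, P • x = 0) : Module.Finite R L := by
  have hann : Module.IsTorsionBySet R[X] L (Ideal.span {P} : Ideal R[X]) :=
    (Module.isTorsionBySet_span_singleton_iff P).2 hPL
  let _ : Module (R[X] ⧸ Ideal.span {P}) L := hann.module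
  have : IsScalarTower R[X] (R[X] ⧸ Ideal.span {P}) L := hann.isScalarTower
  have : IsScalarTower R (R[X] ⧸ Ideal.span {P}) L := hann.isScalarTower
  have : Module.Finite R (R[X] ⧸ Ideal.span {P}) := hP.finite_quotient
  have : Module.Finite (R[X] ⧸ Ideal.span {P}) L :=
    Module.Finite.of_restrictScalars_finite R[X] _ L
  exact Module.Finite.trans (R[X] ⧸ Ideal.span {P}) L

section PolynomialModule

variable {R M : Type*} [CommRing R] [AddCommGroup M] [Module R M]

theorem eq_zero_of_X_sub_one_smul_eq_zero {x : PolynomialModule R M}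
    (hx : (X - 1 : R[X]) • x = 0) : x = 0 := by
  have hcoeff (n : ℕ) : x.coeff n = if 1 ≤ n then x.coeff (n - 1) else 0 := by
    have hX : (monomial 1 1 : R[X]) • x = x := by
      rwa [sub_smul, one_smul, sub_eq_zero, ← monomial_one_one_eq_X] at hx
    conv_lhs => rw [← hX, PolynomialModule.monomial_smul_apply, one_smul]
  ext n
  induction n with
  | zero => simpa using hcoeff 0
  | succ n ih => simpa [ih] using hcoeff (n + 1)

theorem exists_X_sub_one_smul_eq (x : PolynomialModule R M) :
    ∃ y : PolynomialModule R M,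
      (X - 1 : R[X]) • y = x - PolynomialModule.single R 0 (PolynomialModule.eval 1 x) := by
  induction x using PolynomialModule.induction_linear with
  | zero => exact ⟨0, by simp⟩
  | add x₁ x₂ h₁ h₂ =>
    obtain ⟨y₁, hy₁⟩ := h₁
    obtain ⟨y₂, hy₂⟩ := h₂
    exact ⟨y₁ + y₂, by
      rw [smul_add, hy₁, hy₂, map_add, PolynomialModule.single_add, add_sub_add_comm]⟩
  | single n m =>
    obtain ⟨p, hp⟩ := sub_one_dvd_pow_sub_one (X : R[X]) n
    refine ⟨p • PolynomialModule.single R 0 m, ?_⟩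
    rw [← mul_smul, ← hp, sub_smul, one_smul, ← monomial_one_right_eq_X_pow,
      PolynomialModule.monomial_smul_single, PolynomialModule.eval_single, one_pow, one_smul,
      add_zero]

end PolynomialModule

variable {S : Type*} [CommRing S] (𝒜 : ℕ → AddSubgroup S) [GradedRing 𝒜]

/-- The ring homomorphism `S → S[X]`, `s ↦ ∑ sₙ Xⁿ`, which encodes the grading of `S`. -/
noncomputable def gradingCoaction : S →+* S[X] :=
  (DirectSum.toSemiring (A := fun n ↦ 𝒜 n)
    (fun n ↦ (monomial n).toAddMonoidHom.comp (𝒜 n).subtype)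
    (by simp) (by simp [monomial_mul_monomial])).comp
    (DirectSum.decomposeRingEquiv 𝒜 : S →+* _)

theorem gradingCoaction_of_mem {n : ℕ} {s : S} (hs : s ∈ 𝒜 n) :
    gradingCoaction 𝒜 s = monomial n s := by
  have hdecompose : DirectSum.decomposeRingEquiv 𝒜 s = DirectSum.of (fun n ↦ 𝒜 n) n ⟨s, hs⟩ :=
    DirectSum.decompose_of_mem 𝒜 hs
  rw [gradingCoaction, RingHom.comp_apply, RingHom.coe_coe, hdecompose]
  exact DirectSum.toSemiring_of _ _ _ n _

theorem eval_one_gradingCoaction (s : S) : (gradingCoaction 𝒜 s).eval 1 = s := by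
  induction s using DirectSum.Decomposition.inductionOn 𝒜 with
  | zero => simp
  | homogeneous m => simp [gradingCoaction_of_mem 𝒜 m.2]
  | add s t hs ht => simp [hs, ht]

/-- The ring endomorphism of `S[X]` fixing `X` and multiplying each `s` of degree `n` by `Xⁿ`. -/
noncomputable def gradingRescale : S[X] →+* S[X] :=
  eval₂RingHom (gradingCoaction 𝒜) X

theorem gradingRescale_X : gradingRescale 𝒜 X = X := eval₂_X _ _

theorem gradingRescale_C (s : S) : gradingRescale 𝒜 (C s) = gradingCoaction 𝒜 s := eval₂_C _ _

theorem eval_one_gradingRescale (p : S[X]) : (gradingRescale 𝒜 p).eval 1 = p.eval 1 := by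
  induction p using Polynomial.induction_on' with
  | add p q hp hq => simp [hp, hq]
  | monomial n s => simp [gradingRescale, eval_one_gradingCoaction]

theorem exists_monic_gradingRescale_eq {b : S} (hb : (DirectSum.decompose 𝒜 b 0 : S) = 1) :
    ∃ P : S[X], P.Monic ∧ ∃ N : ℕ, gradingRescale 𝒜 P = X ^ N * C b := by
  classical
  obtain ⟨N, hN⟩ : ∃ N : ℕ, (DirectSum.decompose 𝒜 b).support ⊆ Finset.range (N + 1) :=
    (DirectSum.decompose 𝒜 b).support.exists_nat_subset_range.elim fun N hN ↦
      ⟨N, hN.trans (Finset.range_mono N.le_succ)⟩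
  have hsum : ∑ n ∈ Finset.range (N + 1), (DirectSum.decompose 𝒜 b n : S) = b := by
    conv_rhs => rw [← DirectSum.sum_support_decompose 𝒜 b]
    refine (Finset.sum_subset hN fun n _ hn ↦ ?_).symm
    rw [DFinsupp.notMem_support_iff.1 hn, ZeroMemClass.coe_zero]
  refine ⟨∑ n ∈ Finset.range (N + 1), C (DirectSum.decompose 𝒜 b n : S) * X ^ (N - n), ?_, N, ?_⟩
  · rw [Finset.sum_range_succ', hb, map_one, one_mul, Nat.sub_zero, add_comm]
    refine monic_X_pow_add ((degree_sum_le _ _).trans_lt ?_)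
    refine (Finset.sup_lt_iff (WithBot.bot_lt_coe N)).2 fun n hn ↦ ?_
    refine (degree_C_mul_X_pow_le _ _).trans_lt ?_
    have := Finset.mem_range.1 hn
    exact WithBot.coe_lt_coe.2 (Nat.sub_lt (Nat.zero_lt_of_lt this) n.succ_pos)
  · conv_rhs => rw [← hsum, map_sum, Finset.mul_sum]
    rw [map_sum]
    refine Finset.sum_congr rfl fun n hn ↦ ?_
    rw [map_mul, map_pow, gradingRescale_X, gradingRescale_C,
      gradingCoaction_of_mem 𝒜 (SetLike.coe_mem _), ← C_mul_X_pow_eq_monomial, mul_assoc,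
      ← pow_add, Nat.add_sub_cancel' (Finset.mem_range_succ_iff.1 hn), mul_comm]

variable (M : Type*) [AddCommGroup M] [Module S M]

/-- The `S[X]`-module `M[X]` with `S` acting by `s • m Xⁱ = (s m) Xⁱ⁺ⁿ` for `s` of degree `n`. -/
def RescaledModule (_ : ℕ → AddSubgroup S) (M : Type*) [AddCommGroup M] [Module S M] : Type _ :=
  PolynomialModule S M

namespace RescaledModule

noncomputable instance : AddCommGroup (RescaledModule 𝒜 M) :=
  inferInstanceAs (AddCommGroup (PolynomialModule S M))

noncomputable instance : Module S[X] (RescaledModule 𝒜 M) :=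
  Module.compHom (PolynomialModule S M) (gradingRescale 𝒜)

noncomputable instance : Module S (RescaledModule 𝒜 M) :=
  Module.compHom (RescaledModule 𝒜 M) (C : S →+* S[X])

instance : IsScalarTower S S[X] (RescaledModule 𝒜 M) :=
  IsScalarTower.of_algebraMap_smul fun _ _ ↦ rfl

/-- The element `m Xⁿ`. -/
noncomputable def single (n : ℕ) : M →+ RescaledModule 𝒜 M :=
  (PolynomialModule.lsingle S n : M →ₗ[S] PolynomialModule S M).toAddMonoidHom

variable {M}

theorem X_smul_single (n : ℕ) (m : M) :
    (X : S[X]) • single 𝒜 M n m = single 𝒜 M (n + 1) m := by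
  change gradingRescale 𝒜 X • PolynomialModule.single S n m = PolynomialModule.single S (n + 1) m
  rw [gradingRescale_X, ← monomial_one_one_eq_X, PolynomialModule.monomial_smul_single, one_smul,
    add_comm]

theorem X_pow_smul_single (k n : ℕ) (m : M) :
    (X ^ k : S[X]) • single 𝒜 M n m = single 𝒜 M (n + k) m := by
  induction k with
  | zero => rw [pow_zero, one_smul, add_zero]
  | succ k ih => rw [pow_succ', mul_smul, ih, X_smul_single, add_assoc]

theorem C_smul_single {d : ℕ} {s : S} (hs : s ∈ 𝒜 d) (n : ℕ) (m : M) :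
    (C s : S[X]) • single 𝒜 M n m = (X ^ d : S[X]) • single 𝒜 M n (s • m) := by
  rw [X_pow_smul_single, add_comm]
  change gradingRescale 𝒜 (C s) • PolynomialModule.single S n m = _
  rw [gradingRescale_C, gradingCoaction_of_mem 𝒜 hs, PolynomialModule.monomial_smul_single]
  rfl

theorem X_sub_one_smul (x : RescaledModule 𝒜 M) :
    (X - 1 : S[X]) • x = ((X - 1 : S[X]) • (show PolynomialModule S M from x) :) := by
  change gradingRescale 𝒜 (X - 1) • (show PolynomialModule S M from x) = _
  rw [map_sub, gradingRescale_X, map_one]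

variable (M) in
/-- Evaluation at `X = 1`; it is `S`-linear because `∑ sₙ = s`. -/
noncomputable def evalOne : RescaledModule 𝒜 M →ₗ[S] M where
  toFun := PolynomialModule.eval (1 : S)
  map_add' := map_add (PolynomialModule.eval (1 : S))
  map_smul' s x := by
    refine (PolynomialModule.eval_smul (gradingRescale 𝒜 (C s)) x 1).trans ?_
    rw [eval_one_gradingRescale, eval_C, RingHom.id_apply]

theorem evalOne_single (n : ℕ) (m : M) : evalOne 𝒜 M (single 𝒜 M n m) = m := by
  refine (PolynomialModule.eval_single 1 n m).trans ?_
  rw [one_pow, one_smul]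

theorem evalOne_smul (p : S[X]) (x : RescaledModule 𝒜 M) :
    evalOne 𝒜 M (p • x) = p.eval 1 • evalOne 𝒜 M x := by
  refine (PolynomialModule.eval_smul (gradingRescale 𝒜 p) x 1).trans ?_
  rw [eval_one_gradingRescale]
  rfl

theorem evalOne_eq_zero_iff {x : RescaledModule 𝒜 M} :
    evalOne 𝒜 M x = 0 ↔ ∃ y : RescaledModule 𝒜 M, (X - 1 : S[X]) • y = x := by
  constructor
  · intro hx
    obtain ⟨y, hy⟩ := exists_X_sub_one_smul_eq (show PolynomialModule S M from x)
    refine ⟨y, (X_sub_one_smul 𝒜 y).trans (hy.trans ?_)⟩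
    rw [show PolynomialModule.eval 1 x = 0 from hx, PolynomialModule.single_zero, sub_zero]
  · rintro ⟨y, rfl⟩
    rw [evalOne_smul, eval_sub, eval_X, eval_one, sub_self, zero_smul]

theorem exists_X_pow_smul_mem_span {g : Set M} (hg : Submodule.span S g = ⊤)
    (x : RescaledModule 𝒜 M) :
    ∃ k : ℕ, (X ^ k : S[X]) • x ∈ Submodule.span S[X] (single 𝒜 M 0 '' g) := by
  set L := Submodule.span S[X] (single 𝒜 M 0 '' g)
  let T := (Submodule.torsion' S[X] (RescaledModule 𝒜 M ⧸ L)
    (Submonoid.powers (X : S[X]))).comap L.mkQ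
  have mem_T {y : RescaledModule 𝒜 M} : y ∈ T ↔ ∃ k : ℕ, (X ^ k : S[X]) • y ∈ L := by
    simp [T, Submonoid.mem_powers_iff, Submonoid.smul_def, ← Submodule.Quotient.mk_smul]
  have single_mem (m : M) : single 𝒜 M 0 m ∈ T := by
    have hm : m ∈ Submodule.span S g := hg ▸ Submodule.mem_top
    induction hm using Submodule.span_induction with
    | mem m hm => exact mem_T.2 ⟨0, L.smul_mem _ (Submodule.subset_span ⟨m, hm, rfl⟩)⟩
    | zero => exact (map_zero (single 𝒜 M 0)).symm ▸ T.zero_mem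
    | add m₁ m₂ _ _ h₁ h₂ => exact (map_add (single 𝒜 M 0) m₁ m₂).symm ▸ T.add_mem h₁ h₂
    | smul s m _ hm =>
      induction s using DirectSum.Decomposition.inductionOn 𝒜 with
      | zero => simp
      | @homogeneous d s =>
        obtain ⟨k, hk⟩ := mem_T.1 hm
        refine mem_T.2 ⟨k + d, ?_⟩
        rw [pow_add, mul_smul, ← C_smul_single 𝒜 s.2, smul_comm]
        exact L.smul_mem _ hk
      | add s t hs ht => exact add_smul s t m ▸ map_add (single 𝒜 M 0) _ _ ▸ T.add_mem hs ht
  rw [← mem_T]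
  induction x using PolynomialModule.induction_linear with
  | zero => exact T.zero_mem
  | add x y hx hy => exact T.add_mem hx hy
  | single n m =>
    have := T.smul_mem (X ^ n) (single_mem m)
    rwa [X_pow_smul_single, zero_add] at this

theorem finite_of_forall_smul_eq_zero {b : S} (hb : (DirectSum.decompose 𝒜 b 0 : S) = 1)
    (hbM : ∀ m : M, b • m = 0) (L : Submodule S[X] (RescaledModule 𝒜 M)) [Module.Finite S[X] L] :
    Module.Finite S L := by
  obtain ⟨P, hP, N, hPN⟩ := exists_monic_gradingRescale_eq 𝒜 hb
  refine finite_of_monic_smul_eq_zero hP fun x ↦ Subtype.ext ?_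
  have hbx (y : PolynomialModule S M) : C b • y = 0 := by
    ext n
    rw [← monomial_zero_left, PolynomialModule.monomial_smul_apply, if_pos n.zero_le, hbM]
    rfl
  change gradingRescale 𝒜 P • (show PolynomialModule S M from x.1) = 0
  rw [hPN, mul_smul, hbx, smul_zero]

end RescaledModule

end Polynomial

section Graded

variable {S : Type u} [CommRing S] (𝒜 : ℕ → AddSubgroup S) [GradedRing 𝒜]

open Polynomial RescaledModule in
theorem GGroup.cls_eq_zero_of_decompose_zero_eq_one {M : Type u} [AddCommGroup M] [Module S M]
    [Module.Finite S M] {b : S} (hb : (DirectSum.decompose 𝒜 b 0 : S) = 1)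
    (hbM : ∀ m : M, b • m = 0) : GGroup.cls S M = 0 := by
  obtain ⟨g, hg⟩ := Module.Finite.fg_top (R := S) (M := M)
  let L := Submodule.span S[X] (single 𝒜 M 0 '' g)
  have : Module.Finite S[X] L := Module.Finite.span_of_finite _ (g.finite_toSet.image _)
  have : Module.Finite S L := finite_of_forall_smul_eq_zero 𝒜 hb hbM L
  let f : L →ₗ[S] L := (LinearMap.lsmul S[X] L (X - 1)).restrictScalars S
  let e : L →ₗ[S] M := evalOne 𝒜 M ∘ₗ L.subtype.restrictScalars S
  have hf : Function.Injective f := (injective_iff_map_eq_zero f).2 fun x hx ↦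
    Subtype.ext (eq_zero_of_X_sub_one_smul_eq_zero
      ((X_sub_one_smul 𝒜 _).symm.trans (congrArg Subtype.val hx)))
  have he : Function.Surjective e := by
    refine LinearMap.range_eq_top.1 (top_le_iff.1 (hg ▸ Submodule.span_le.2 fun m hm ↦ ?_))
    exact ⟨⟨single 𝒜 M 0 m, Submodule.subset_span ⟨m, hm, rfl⟩⟩, evalOne_single 𝒜 0 m⟩
  have hfe : Function.Exact f e := by
    refine fun x ↦ (evalOne_eq_zero_iff 𝒜).trans ⟨?_, fun ⟨y, hy⟩ ↦ ⟨y, congrArg Subtype.val hy⟩⟩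
    rintro ⟨y, (hy : (X - 1 : S[X]) • y = x)⟩
    obtain ⟨k, hk⟩ := exists_X_pow_smul_mem_span 𝒜 hg y
    obtain ⟨p, hp⟩ := sub_one_dvd_pow_sub_one (X : S[X]) k
    have hyL : y ∈ L := by
      have := L.sub_mem hk (L.smul_mem p (hy ▸ x.2))
      rwa [← mul_smul, mul_comm, ← hp, ← sub_smul, sub_sub_cancel, one_smul] at this
    exact ⟨⟨y, hyL⟩, Subtype.ext hy⟩
  simpa using cls_eq_add_of_exact hf hfe he

theorem coe_decompose_zero_mul_inv {b : S} (hb : IsUnit (DirectSum.decompose 𝒜 b 0)) :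
    (DirectSum.decompose 𝒜 (b * (↑hb.unit⁻¹ : 𝒜 0)) 0 : S) = 1 := by
  rw [DirectSum.coe_decompose_mul_of_right_mem_zero 𝒜 (SetLike.coe_mem _),
    ← SetLike.GradeZero.coe_mul, hb.mul_val_inv, SetLike.GradeZero.coe_one]

theorem torsionClassesVanish_of_isUnit_decompose_zero {T : Submonoid S}
    (hT : ∀ s ∈ T, IsUnit (DirectSum.decompose 𝒜 s 0)) : GGroup.TorsionClassesVanish T := by
  intro M _ _ _ hM
  have hloc : LocalizedModule.mkLinearMap T M ∘ₗ LinearMap.id =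
      LocalizedModule.mkLinearMap T M ∘ₗ 0 := LinearMap.ext fun m ↦ by
    rw [LinearMap.comp_apply, LinearMap.id_apply, LinearMap.comp_zero, LinearMap.zero_apply,
      IsLocalizedModule.eq_zero_iff T]
    exact @hM m
  obtain ⟨b, hb⟩ := Module.Finite.exists_smul_of_comp_eq_of_isLocalizedModule T
    (LocalizedModule.mkLinearMap T M) LinearMap.id 0 hloc
  have hbM (m : M) : (b : S) • m = 0 := (LinearMap.congr_fun hb m).trans (smul_zero b)
  refine GGroup.cls_eq_zero_of_decompose_zero_eq_one 𝒜
    (coe_decompose_zero_mul_inv 𝒜 (hT b b.2)) fun m ↦ ?_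
  rw [mul_comm, mul_smul, hbM, smul_zero]

theorem isUnit_decompose_zero_of_notMem_irrelevant (h𝒜 : IsField (𝒜 0)) {s : S}
    (hs : s ∉ (HomogeneousIdeal.irrelevant 𝒜).toIdeal) : IsUnit (DirectSum.decompose 𝒜 s 0) := by
  let _ := h𝒜.toField
  refine isUnit_iff_ne_zero.2 fun h ↦ hs ?_
  change s ∈ HomogeneousIdeal.irrelevant 𝒜
  rw [HomogeneousIdeal.mem_irrelevant_iff, GradedRing.proj_apply, h, ZeroMemClass.coe_zero]

theorem kamoi_kurano_localization_iso_general [IsNoetherianRing S] (T : Submonoid S)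
    (hT : ∀ s ∈ T, IsUnit (DirectSum.decompose 𝒜 s 0))
    (A : Type u) [CommRing A] [Algebra S A] [IsLocalization T A] :
    ∃ φ : GGroup S ≃+ GGroup A,
      ∀ (M : Type u) [AddCommGroup M] [Module S M] [Module.Finite S M],
        φ (GGroup.cls S M) = GGroup.cls A (A ⊗[S] M) :=
  let hvanish := torsionClassesVanish_of_isUnit_decompose_zero 𝒜 hT
  ⟨hvanish.localizationEquiv A, hvanish.localizationEquiv_cls A⟩

end Graded

/-- **Kamoi–Kurano** (Proposition 2.3).  Let `S = ⊕_{n ≥ 0} Sₙ` be a commutative Noetherian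
`ℕ`-graded ring whose degree-zero part `S₀` is a field, let `S₊ = ⊕_{n > 0} Sₙ` be the
irrelevant (maximal, hence prime) ideal, and let `A = S_{S₊}`.  Then the map
`G(S) → G(A)`, `[M] ↦ [A ⊗_S M] = [M_{S₊}]`, induced by localization is an isomorphism of
Grothendieck groups. -/
theorem kamoi_kurano_localization_iso
    (S : Type u) [CommRing S] [IsNoetherianRing S]
    (𝒜 : ℕ → AddSubgroup S) [GradedRing 𝒜]
    (hfield : IsField (𝒜 0))
    [hprime : (HomogeneousIdeal.irrelevant 𝒜).toIdeal.IsPrime] :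
    ∃ φ : GGroup S ≃+ GGroup (Localization.AtPrime (HomogeneousIdeal.irrelevant 𝒜).toIdeal),
      ∀ (M : Type u) [AddCommGroup M] [Module S M] [Module.Finite S M],
        φ (GGroup.cls S M) =
          GGroup.cls (Localization.AtPrime (HomogeneousIdeal.irrelevant 𝒜).toIdeal)
            (Localization.AtPrime (HomogeneousIdeal.irrelevant 𝒜).toIdeal ⊗[S] M) :=
  kamoi_kurano_localization_iso_general 𝒜
    (HomogeneousIdeal.irrelevant 𝒜).toIdeal.primeCompl
    (fun _ ↦ isUnit_decompose_zero_of_notMem_irrelevant 𝒜 hfield) _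
end

section
/- Let R̂ = ℝ[[x,y,z,w]]/(x² + y² − (w+1)z²), let α ∈ R̂ be a unit with α² = w + 1, and let Q = (x, y − αz)R̂. Then Q is a prime ideal of R̂ of height 1, and (x,y,z)R̂ = Q + (y + αz)R̂. -/
/-!
Statement 8: in `R̂ = ℝ[[x,y,z,w]]/(x² + y² − (w+1)z²)`, for a unit `α` with `α² = w + 1`, the
ideal `Q = (x, y − αz)` is a prime of height `1`, and `(x,y,z)R̂ = Q + (y + αz)R̂`.
-/
noncomputable section

open MvPowerSeries

/-- The power series `x² + y² − (w+1)z² ∈ ℝ[[x,y,z,w]]`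
(with `x = X 0`, `y = X 1`, `z = X 2`, `w = X 3`). -/
def quadSeries : MvPowerSeries (Fin 4) ℝ :=
  X 0 ^ 2 + X 1 ^ 2 - (X 3 + 1) * X 2 ^ 2

/-- The complete local ring `R̂ = ℝ[[x,y,z,w]]/(x² + y² − (w+1)z²)`. -/
def Rhat : Type := MvPowerSeries (Fin 4) ℝ ⧸ Ideal.span {quadSeries}

instance : CommRing Rhat := by unfold Rhat; infer_instance

/-- The images `x`, `y`, `z`, `w` of the four variables in `R̂`. -/
def xh : Rhat := Ideal.Quotient.mk _ (X 0)
def yh : Rhat := Ideal.Quotient.mk _ (X 1)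
def zh : Rhat := Ideal.Quotient.mk _ (X 2)
def wh : Rhat := Ideal.Quotient.mk _ (X 3)

/-- The ideal `P R̂ = (x, y, z)` of `R̂`. -/
def Phat : Ideal Rhat := Ideal.span {xh, yh, zh}


/-!
Since `R̂` is local and `2α` is a unit, `α` is up to sign the binomial series `√(1 + w)`. The
substitution `x ↦ 0`, `y ↦ αz` is a retraction of `ℝ[[x,y,z,w]]` with kernel `(x, y − αz)`, because
`f(b) − f(a)` lies in the ideal generated by the `bᵢ − aᵢ`. It kills `x² + y² − (w+1)z²`, so `Q` is
prime. As `x² = −(y − αz)(y + αz)` and `y + αz ∉ Q`, the prime `Q` is minimal over the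
nonzerodivisor `x`, and Krull's principal ideal theorem gives height `1`.
-/

section CommutativeAlgebra

variable {R : Type*} [CommRing R]

lemma eq_or_eq_neg_of_sq_eq_sq_of_isUnit [IsLocalRing R] {a b : R} (hb : IsUnit (2 * b))
    (h : a ^ 2 = b ^ 2) : a = b ∨ a = -b := by
  have hprod : (b + a) * (b - a) = 0 := by linear_combination -h
  have hsum : IsUnit ((b + a) + (b - a)) := by convert hb using 1; ring
  rcases IsLocalRing.isUnit_or_isUnit_of_isUnit_add hsum with hadd | hsub
  · exact .inl (sub_eq_zero.mp (hadd.mul_right_eq_zero.mp hprod)).symm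
  · exact .inr (eq_neg_of_add_eq_zero_right (hsub.mul_left_eq_zero.mp hprod))

lemma mk_mem_nonZeroDivisors_of_prime_of_not_dvd [IsDomain R] {p q : R} (hp : Prime p)
    (hpq : ¬ p ∣ q) : Ideal.Quotient.mk (Ideal.span {q}) p ∈ nonZeroDivisors _ := by
  rw [mem_nonZeroDivisors_iff_right]
  intro r hr
  obtain ⟨a, rfl⟩ := Ideal.Quotient.mk_surjective r
  rw [← map_mul, Ideal.Quotient.eq_zero_iff_dvd] at hr
  obtain ⟨b, hb⟩ := hr
  obtain ⟨c, rfl⟩ := (hp.dvd_or_dvd ⟨a, by rw [← hb, mul_comm]⟩).resolve_left hpq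
  rw [Ideal.Quotient.eq_zero_iff_dvd]
  exact ⟨c, mul_right_cancel₀ hp.ne_zero (by rw [hb]; ring)⟩

lemma span_pair_mem_minimalPrimes_span_singleton {x p q : R} (hprime : (Ideal.span {x, p}).IsPrime)
    (hq : q ∉ Ideal.span {x, p}) (hx : x ∣ p * q) :
    Ideal.span {x, p} ∈ (Ideal.span {x}).minimalPrimes := by
  refine ⟨⟨hprime, Ideal.span_mono (by simp)⟩, fun P ⟨hP, hxP⟩ hle => ?_⟩
  have hxmem : x ∈ P := (Ideal.span_singleton_le_iff_mem _).mp hxP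
  have hpq : p * q ∈ P := P.mem_of_dvd hx hxmem
  have hp : p ∈ P := (hP.mem_or_mem hpq).resolve_right fun h => hq (hle h)
  exact Ideal.span_le.mpr (Set.pair_subset hxmem hp)

lemma height_eq_one_of_mem_minimalPrimes_span_singleton [IsNoetherianRing R] {x : R}
    (hx : x ∈ nonZeroDivisors R) {P : Ideal R} (hP : P ∈ (Ideal.span {x}).minimalPrimes) :
    P.height = 1 := by
  have hunit : ¬ IsUnit x := fun h =>
    hP.isPrime.ne_top (Ideal.eq_top_of_isUnit_mem P (hP.le (Ideal.mem_span_singleton_self x)) h)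
  apply le_antisymm (Ideal.height_le_one_of_isPrincipal_of_mem_minimalPrimes _ P hP)
  rw [← Ideal.height_span_singleton_eq_one_of_mem_nonZeroDivisors hx hunit]
  exact Ideal.height_mono hP.le

lemma span_triple_eq_sup_span_add_mul (x y : R) {a : R} (z : R) (ha : IsUnit (2 * a)) :
    Ideal.span {x, y, z} = Ideal.span {x, y - a * z} ⊔ Ideal.span {y + a * z} := by
  apply le_antisymm
  · set J := Ideal.span {x, y - a * z} ⊔ Ideal.span {y + a * z}
    have hx : x ∈ J := Ideal.mem_sup_left (Ideal.subset_span (by simp))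
    have hsub : y - a * z ∈ J := Ideal.mem_sup_left (Ideal.subset_span (by simp))
    have hadd : y + a * z ∈ J := Ideal.mem_sup_right (Ideal.mem_span_singleton_self _)
    have hz : z ∈ J := by
      rw [← Ideal.unit_mul_mem_iff_mem J ha]
      convert J.sub_mem hadd hsub using 1
      ring
    have hy : y ∈ J := by simpa using J.add_mem hsub (J.mul_mem_left a hz)
    rw [Ideal.span_le]
    rintro _ (rfl | rfl | rfl)
    exacts [hx, hy, hz]
  · set J := Ideal.span {x, y, z}
    have hx : x ∈ J := Ideal.subset_span (by simp)
    have hy : y ∈ J := Ideal.subset_span (by simp)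
    have hz : a * z ∈ J := J.mul_mem_left a (Ideal.subset_span (by simp))
    rw [sup_le_iff, Ideal.span_le, Ideal.span_singleton_le_iff_mem]
    exact ⟨Set.pair_subset hx (J.sub_mem hy hz), J.add_mem hy hz⟩

end CommutativeAlgebra

lemma exists_sq_eq_one_add_X (R : Type*) [CommRing R] [Algebra ℚ R] :
    ∃ u : PowerSeries R, u ^ 2 = 1 + PowerSeries.X := by
  refine ⟨PowerSeries.binomialSeries R (1 / 2 : ℚ), ?_⟩
  calc PowerSeries.binomialSeries R (1 / 2 : ℚ) ^ 2
      = PowerSeries.binomialSeries R ((1 : ℕ) : ℚ) := by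
        rw [sq, ← PowerSeries.binomialSeries_add]; norm_num
    _ = 1 + PowerSeries.X := by rw [PowerSeries.binomialSeries_nat, pow_one]

section Substitution

variable {σ τ R S : Type*} [CommRing R] [CommRing S] [Algebra R S]

lemma X_dvd_sub_rescale_update [DecidableEq σ] (i : σ) (f : MvPowerSeries σ R) :
    X i ∣ f - rescale (Function.update 1 i 0) f := by
  rw [X_dvd_iff]
  intro m hm
  have hprod : (m.prod fun j k => (Function.update 1 i 0 : σ → R) j ^ k) = 1 := by
    refine Finset.prod_eq_one fun j _ => ?_
    by_cases hj : j = i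
    · subst hj; simp [hm]
    · simp [Function.update_of_ne hj]
  rw [map_sub, coeff_rescale, hprod, one_mul, sub_self]

lemma rescale_X (a : σ → R) (i : σ) : rescale a (X i) = C (a i) * X i := by
  rw [rescale_eq_subst, subst_X (HasSubst.smul_X a), Pi.smul_apply', smul_eq_C_mul]

lemma X_dvd_iff_rescale_update_eq_zero [DecidableEq σ] (i : σ) (f : MvPowerSeries σ R) :
    X i ∣ f ↔ rescale (Function.update 1 i 0) f = 0 := by
  constructor
  · rintro ⟨g, rfl⟩
    rw [map_mul, rescale_X, Function.update_self, map_zero, zero_mul, zero_mul]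
  · intro hf
    simpa only [hf, sub_zero] using X_dvd_sub_rescale_update i f

instance [IsDomain R] : IsDomain (MvPowerSeries σ R) :=
  NoZeroDivisors.to_isDomain _

lemma prime_mvPowerSeries_X [IsDomain R] (i : σ) : Prime (X i : MvPowerSeries σ R) := by
  classical
  refine ⟨fun h => ?_, fun h => ?_, fun f g => ?_⟩
  · simpa using congrArg (coeff (Finsupp.single i 1)) h
  · simpa using h.map (constantCoeff (σ := σ) (R := R))
  · simp only [X_dvd_iff_rescale_update_eq_zero, map_mul, mul_eq_zero, imp_self]

lemma hasSubst_update [DecidableEq σ] {a : σ → MvPowerSeries τ S} (ha : HasSubst a) (i : σ)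
    {t : MvPowerSeries τ S} (ht : IsNilpotent (constantCoeff t)) :
    HasSubst (Function.update a i t) where
  const_coeff := Function.forall_update_iff a (fun _ c => IsNilpotent (constantCoeff c)) |>.mpr
    ⟨ht, fun j _ => ha.const_coeff j⟩
  coeff_zero d := ((ha.coeff_zero d).insert i).subset fun j hj => by
    by_cases hji : j = i
    · exact .inl hji
    · exact .inr (by simpa [Function.update_of_ne hji] using hj)

lemma hasSubst_optionElim {a : σ → MvPowerSeries τ S} (ha : HasSubst a) {t : MvPowerSeries τ S}
    (ht : IsNilpotent (constantCoeff t)) : HasSubst (fun o : Option σ => o.elim t a) where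
  const_coeff
    | none => ht
    | some j => ha.const_coeff j
  coeff_zero d := (((ha.coeff_zero d).image some).insert none).subset fun
    | none, _ => .inl rfl
    | some j, hj => .inr ⟨j, hj, rfl⟩

/-- The substitution `Xᵢ ↦ Xᵢ + T` fixing the other variables, where `T = X none` is a new
variable; it serves to compare the values of a series at points differing in one coordinate. -/
def shiftVar (R : Type*) [CommRing R] [DecidableEq σ] (i : σ) : σ → MvPowerSeries (Option σ) R :=
  Function.update (X ∘ Function.Embedding.some) i (X (some i) + X none)

lemma hasSubst_shiftVar [DecidableEq σ] (i : σ) : HasSubst (shiftVar R i) :=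
  hasSubst_update (.X_comp _) i (by simp)

lemma X_none_dvd_subst_shiftVar_sub_rename [DecidableEq σ] (i : σ) (f : MvPowerSeries σ R) :
    X none ∣ subst (shiftVar R i) f - rename Function.Embedding.some f := by
  suffices h : rename Function.Embedding.some f =
      rescale (Function.update 1 none 0) (subst (shiftVar R i) f) by
    rw [h]
    exact X_dvd_sub_rescale_update none _
  rw [rename_eq_subst, rescale_eq_subst,
    subst_comp_subst_apply (hasSubst_shiftVar i) (HasSubst.smul_X _)]
  congr 1
  funext j
  rw [← rescale_eq_subst]
  rcases eq_or_ne j i with rfl | hj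
  · simp [shiftVar, rescale_X]
  · simp [shiftVar, Function.update_of_ne hj, rescale_X]

/- With a new variable `T`, the series `f(…, Xᵢ + T, …) - f` is divisible by `T`; specialize it
at `X = a`, `T = t - aᵢ`. -/
lemma sub_dvd_subst_update_sub_subst [DecidableEq σ] {a : σ → MvPowerSeries τ S}
    (ha : HasSubst a) (i : σ) {t : MvPowerSeries τ S} (ht : IsNilpotent (constantCoeff t))
    (f : MvPowerSeries σ R) :
    t - a i ∣ subst (Function.update a i t) f - subst a f := by
  have hspec : HasSubst (fun o : Option σ => o.elim (t - a i) a) := hasSubst_optionElim ha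
    (by simpa only [map_sub] using (Commute.all _ _).isNilpotent_sub ht (ha.const_coeff i))
  convert map_dvd (substAlgHom (R := R) hspec) (X_none_dvd_subst_shiftVar_sub_rename i f) using 1
  · rw [substAlgHom_X, Option.elim_none]
  · rw [map_sub, substAlgHom_apply, substAlgHom_apply, rename_eq_subst,
      subst_comp_subst_apply (hasSubst_shiftVar i) hspec,
      subst_comp_subst_apply (.X_comp _) hspec]
    congr 2
    · funext j
      rcases eq_or_ne j i with rfl | hj
      · simp [shiftVar, subst_add hspec, subst_X hspec]
      · simp [shiftVar, Function.update_of_ne hj, subst_X hspec]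
    · funext j
      exact (subst_X hspec (some j)).symm

lemma subst_sub_subst_mem_span [Finite σ] {a b : σ → MvPowerSeries τ S}
    (ha : HasSubst a) (hb : HasSubst b) (f : MvPowerSeries σ R) :
    subst b f - subst a f ∈ Ideal.span (Set.range fun i => b i - a i) := by
  classical
  cases nonempty_fintype σ
  suffices h : ∀ s : Finset σ, subst (s.piecewise b a) f - subst a f ∈
      Ideal.span (Set.range fun i => b i - a i) by
    simpa only [Finset.piecewise_univ] using h Finset.univ
  intro s
  induction s using Finset.induction_on with
  | empty => simp only [Finset.piecewise_empty, sub_self, Submodule.zero_mem]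
  | insert i s his ih =>
    have hs : HasSubst (s.piecewise b a) := hasSubst_of_constantCoeff_nilpotent fun j =>
      s.piecewise_cases b a (fun c => IsNilpotent (constantCoeff c))
        (hb.const_coeff j) (ha.const_coeff j)
    have hstep := sub_dvd_subst_update_sub_subst hs i (hb.const_coeff i) f
    rw [← Finset.piecewise_insert, Finset.piecewise_eq_of_notMem _ _ _ his] at hstep
    rw [← sub_add_sub_cancel _ (subst (s.piecewise b a) f)]
    exact add_mem (Ideal.mem_of_dvd _ hstep (Ideal.subset_span ⟨i, rfl⟩)) ih

lemma ker_substAlgHom_of_subst_self [Finite σ] {a : σ → MvPowerSeries σ R}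
    (ha : HasSubst a) (hidem : ∀ i, subst a (a i) = a i) :
    RingHom.ker (substAlgHom (R := R) ha) = Ideal.span (Set.range fun i => X i - a i) := by
  apply le_antisymm
  · intro f hf
    rw [RingHom.mem_ker, substAlgHom_apply] at hf
    have := subst_sub_subst_mem_span ha HasSubst.X f
    rwa [hf, sub_zero, subst_self, id] at this
  · rw [Ideal.span_le]
    rintro _ ⟨i, rfl⟩
    rw [SetLike.mem_coe, RingHom.mem_ker, map_sub, substAlgHom_X, substAlgHom_apply,
      hidem, sub_self]

end Substitution

/-- The quotient map `ℝ[[x,y,z,w]] → R̂`, as a ring homomorphism into the type `Rhat`. -/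
def toRhat : MvPowerSeries (Fin 4) ℝ →+* Rhat :=
  Ideal.Quotient.mk (Ideal.span {quadSeries})

lemma toRhat_surjective : Function.Surjective toRhat :=
  Ideal.Quotient.mk_surjective

instance : IsNoetherianRing Rhat :=
  isNoetherianRing_of_surjective _ _ toRhat toRhat_surjective

instance : IsLocalRing Rhat :=
  have hquad : ¬ IsUnit quadSeries := by simp [isUnit_iff_constantCoeff, quadSeries]
  have : Nontrivial Rhat := Ideal.Quotient.nontrivial_iff.mpr
    (by rwa [Ne, Ideal.span_singleton_eq_top])
  .of_surjective' toRhat toRhat_surjective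

lemma isUnit_two_Rhat : IsUnit (2 : Rhat) := by
  simpa only [map_ofNat] using (IsUnit.mk0 (2 : ℝ) two_ne_zero).map (toRhat.comp C)

lemma not_X_zero_dvd_quadSeries : ¬ X 0 ∣ quadSeries := by
  intro h
  have hzero : coeff (Finsupp.single 1 2) quadSeries = 0 := X_dvd_iff.mp h _ (by simp)
  have hz : coeff (Finsupp.single 1 2) ((X 3 + 1) * X 2 ^ 2 : MvPowerSeries (Fin 4) ℝ) = 0 :=
    X_pow_dvd_iff.mp (dvd_mul_left _ _) _ (by simp)
  simp [quadSeries, hz, coeff_X_pow, Finsupp.single_eq_single_iff] at hzero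

lemma xh_mem_nonZeroDivisors : xh ∈ nonZeroDivisors Rhat :=
  mk_mem_nonZeroDivisors_of_prime_of_not_dvd (prime_mvPowerSeries_X 0) not_X_zero_dvd_quadSeries

lemma xh_sq_add_yh_sq : xh ^ 2 + yh ^ 2 = (wh + 1) * zh ^ 2 :=
  sub_eq_zero.mp (Ideal.Quotient.mk_singleton_self quadSeries)

section Parametrization

/-- The substitution `x ↦ 0`, `y ↦ s z`, `z ↦ z`, `w ↦ w`. -/
def planePoint (s : MvPowerSeries (Fin 4) ℝ) : Fin 4 → MvPowerSeries (Fin 4) ℝ :=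
  ![0, s * X 2, X 2, X 3]

lemma hasSubst_planePoint (s : MvPowerSeries (Fin 4) ℝ) : HasSubst (planePoint s) :=
  hasSubst_of_constantCoeff_zero fun i => by fin_cases i <;> simp [planePoint]

/-- Restriction of a power series to the smooth surface `x = 0`, `y = s z`. The values stay in
`ℝ[[x,y,z,w]]`, so that the map is a retraction when it fixes `s`. -/
def planeRestrict (s : MvPowerSeries (Fin 4) ℝ) :
    MvPowerSeries (Fin 4) ℝ →ₐ[ℝ] MvPowerSeries (Fin 4) ℝ :=
  substAlgHom (hasSubst_planePoint s)

lemma planeRestrict_X (s : MvPowerSeries (Fin 4) ℝ) (i : Fin 4) :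
    planeRestrict s (X i) = planePoint s i :=
  substAlgHom_X _ i

lemma planeRestrict_toMvPowerSeries (s : MvPowerSeries (Fin 4) ℝ) (u : PowerSeries ℝ) :
    planeRestrict s (u.toMvPowerSeries 3) = u.toMvPowerSeries 3 := by
  rw [planeRestrict, substAlgHom_apply,
    PowerSeries.subst_toMvPowerSeries (hasSubst_planePoint s), PowerSeries.toMvPowerSeries_eq_subst]
  rfl

variable {s : MvPowerSeries (Fin 4) ℝ}

lemma exists_sq_root_lift {α : Rhat} (hα : IsUnit α) (hsq : α ^ 2 = wh + 1) :
    ∃ s, planeRestrict s s = s ∧ s ^ 2 = X 3 + 1 ∧ toRhat s = α := by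
  obtain ⟨u, hu⟩ := exists_sq_eq_one_add_X ℝ
  have hlift (v : PowerSeries ℝ) (hv : v ^ 2 = 1 + PowerSeries.X) :
      v.toMvPowerSeries (3 : Fin 4) ^ 2 = X 3 + 1 := by
    rw [← map_pow, hv, map_add, map_one, PowerSeries.toMvPowerSeries_X, add_comm]
  have hβ : toRhat (u.toMvPowerSeries 3) ^ 2 = α ^ 2 := by
    rw [hsq, ← map_pow, hlift u hu, map_add, map_one]
    rfl
  rcases eq_or_eq_neg_of_sq_eq_sq_of_isUnit (isUnit_two_Rhat.mul hα) hβ with h | h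
  · exact ⟨_, planeRestrict_toMvPowerSeries _ u, hlift u hu, h⟩
  · exact ⟨_, planeRestrict_toMvPowerSeries _ (-u), hlift (-u) (by rw [neg_sq, hu]),
      by rw [map_neg, map_neg, h, neg_neg]⟩

lemma ker_planeRestrict (hs : planeRestrict s s = s) :
    RingHom.ker (planeRestrict s) = Ideal.span {X 0, X 1 - s * X 2} := by
  have hidem (i : Fin 4) : subst (planePoint s) (planePoint s i) = planePoint s i := by
    rw [← substAlgHom_apply (hasSubst_planePoint s), ← planeRestrict]
    fin_cases i <;> simp [planePoint, hs, planeRestrict_X]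
  have hgen : (fun i => X i - planePoint s i) = ![X 0, X 1 - s * X 2, 0, 0] := by
    funext i
    fin_cases i <;> simp [planePoint]
  rw [planeRestrict, ker_substAlgHom_of_subst_self _ hidem, hgen]
  simp only [Matrix.range_cons, Matrix.range_empty, Set.union_empty, Set.union_self,
    Set.singleton_union]
  rw [Set.pair_comm _ 0, Set.insert_comm, Ideal.span_insert_zero]

lemma planeRestrict_quadSeries (hsq : s ^ 2 = X 3 + 1) : planeRestrict s quadSeries = 0 := by
  calc planeRestrict s quadSeries = (s * X 2) ^ 2 - (X 3 + 1) * X 2 ^ 2 := by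
        simp [quadSeries, planeRestrict_X, planePoint]
    _ = 0 := by linear_combination X 2 ^ 2 * hsq

lemma span_quadSeries_le_ker_planeRestrict (hsq : s ^ 2 = X 3 + 1) :
    Ideal.span {quadSeries} ≤ RingHom.ker (planeRestrict s) :=
  (Ideal.span_singleton_le_iff_mem _).mpr (planeRestrict_quadSeries hsq)

lemma map_ker_planeRestrict (hs : planeRestrict s s = s) :
    (RingHom.ker (planeRestrict s)).map toRhat = Ideal.span {xh, yh - toRhat s * zh} := by
  rw [ker_planeRestrict hs, Ideal.map_span, Set.image_pair, map_sub, map_mul]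
  rfl

lemma isPrime_span_xh_yh_sub (hs : planeRestrict s s = s) (hsq : s ^ 2 = X 3 + 1) :
    (Ideal.span {xh, yh - toRhat s * zh}).IsPrime := by
  have := RingHom.ker_isPrime (planeRestrict s)
  rw [← map_ker_planeRestrict hs]
  exact Ideal.map_isPrime_of_surjective toRhat_surjective
    (Ideal.mk_ker.trans_le (span_quadSeries_le_ker_planeRestrict hsq))

lemma toRhat_mem_span_xh_yh_sub_iff (hs : planeRestrict s s = s) (hsq : s ^ 2 = X 3 + 1)
    {f : MvPowerSeries (Fin 4) ℝ} :
    toRhat f ∈ Ideal.span {xh, yh - toRhat s * zh} ↔ planeRestrict s f = 0 := by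
  rw [← map_ker_planeRestrict hs]
  exact SetLike.ext_iff.mp (Ideal.comap_map_mk (span_quadSeries_le_ker_planeRestrict hsq)) f

lemma yh_add_notMem_span_xh_yh_sub (hs : planeRestrict s s = s) (hsq : s ^ 2 = X 3 + 1) :
    yh + toRhat s * zh ∉ Ideal.span {xh, yh - toRhat s * zh} := by
  have hs0 : s ≠ 0 := by
    rintro rfl
    simpa using congrArg constantCoeff hsq
  have himage : planeRestrict s (X 1 + s * X 2) = C 2 * s * X 2 := by
    rw [map_add, map_mul, planeRestrict_X, planeRestrict_X, hs, map_ofNat]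
    simp only [planePoint, Matrix.cons_val]
    ring
  have hlift : yh + toRhat s * zh = toRhat (X 1 + s * X 2) := by
    rw [map_add, map_mul]
    rfl
  rw [hlift, toRhat_mem_span_xh_yh_sub_iff hs hsq, himage]
  have hC : (C 2 : MvPowerSeries (Fin 4) ℝ) ≠ 0 := by
    rw [Ne, map_eq_zero_iff _ C_injective]
    exact two_ne_zero
  exact mul_ne_zero (mul_ne_zero hC hs0) (prime_mvPowerSeries_X 2).ne_zero

end Parametrization

/-- `Q = (x, y − αz)` is a height-one prime of `R̂`, and `(x,y,z)R̂ = Q + (y + αz)R̂`. -/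
theorem Q_prime_height_one_and_sum (α : Rhat) (hα : IsUnit α) (hsq : α ^ 2 = wh + 1) :
    (∃ hQ : (Ideal.span {xh, yh - α * zh} : Ideal Rhat).IsPrime,
        Order.height (⟨Ideal.span {xh, yh - α * zh}, hQ⟩ : PrimeSpectrum Rhat) = 1) ∧
      Phat = Ideal.span {xh, yh - α * zh} ⊔ Ideal.span {yh + α * zh} := by
  obtain ⟨s, hs, hs_sq, rfl⟩ := exists_sq_root_lift hα hsq
  have hprime := isPrime_span_xh_yh_sub hs hs_sq
  have hdvd : xh ∣ (yh - toRhat s * zh) * (yh + toRhat s * zh) :=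
    ⟨-xh, by linear_combination xh_sq_add_yh_sq - zh ^ 2 * hsq⟩
  have hmin := span_pair_mem_minimalPrimes_span_singleton hprime
    (yh_add_notMem_span_xh_yh_sub hs hs_sq) hdvd
  refine ⟨⟨hprime, ?_⟩, span_triple_eq_sup_span_add_mul xh yh zh (isUnit_two_Rhat.mul hα)⟩
  rw [← PrimeSpectrum.height_eq_orderHeight]
  exact height_eq_one_of_mem_minimalPrimes_span_singleton xh_mem_nonZeroDivisors hmin
end
end
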